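/- arXiv:2111.08100 — 2 statements merged into one kernel-verified Lean document; each statement's English description precedes it below -/
import Mathlib

section
/- There exists a function c assigning to every v ∈ [0,1) and every positive integer s a real number c(v, s) > 0, such that for every two-prover one-round game G whose value val(G) is less than 1 and whose answer sets A_1, A_2 satisfy |A_1| · |A_2| = s, and for every positive integer ℓ, the value of the ℓ-fold parallel repetition G^ℓ satisfies val(G^ℓ) ≤ 2^{−c(val(G), s) · ℓ}. -/
/-- The value of a two-prover one-round game given by the query function `f` and the
acceptance predicate `V`: the maximum over deterministic strategies
`P₁ : Q₁ → A₁`, `P₂ : Q₂ → A₂` of the fraction of random seeds `r` that the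
verifier accepts. -/
noncomputable def gameValue {R Q₁ Q₂ A₁ A₂ : Type} [Fintype R] [Nonempty R]
    [Fintype Q₁] [DecidableEq Q₁] [Fintype Q₂] [DecidableEq Q₂]
    [Fintype A₁] [Nonempty A₁] [Fintype A₂] [Nonempty A₂]
    (f : R → Q₁ × Q₂) (V : R → A₁ → A₂ → Bool) : ℝ :=
  (Finset.univ : Finset ((Q₁ → A₁) × (Q₂ → A₂))).sup' Finset.univ_nonempty
    (fun P => ((Finset.univ.filter
      (fun r : R => V r (P.1 (f r).1) (P.2 (f r).2) = true)).card : ℝ) /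
        (Fintype.card R : ℝ))

namespace PR

open Finset

/-- A randomized choice is dominated by a deterministic one. -/
lemma derand {X A : Type} [Fintype X] [Fintype A] [Nonempty A] (α : X → A → ℝ)
    (h0 : ∀ x a, 0 ≤ α x a) (h1 : ∀ x, ∑ a, α x a = 1) (F : X → A → ℝ) :
    ∃ P : X → A, ∑ x, ∑ a, α x a * F x a ≤ ∑ x, F x (P x) := by
  choose P hP using fun x => Finite.exists_max (F x)
  refine ⟨P, Finset.sum_le_sum fun x _ => ?_⟩
  calc ∑ a, α x a * F x a ≤ ∑ a, α x a * F x (P x) :=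
        Finset.sum_le_sum fun a _ => mul_le_mul_of_nonneg_left (hP x a) (h0 x a)
    _ = F x (P x) := by rw [← Finset.sum_mul, h1, one_mul]

/-- Real-valued indicator of a Boolean. -/
def ind (b : Bool) : ℝ := if b = true then 1 else 0

lemma ind_nonneg (b : Bool) : 0 ≤ ind b := by unfold ind; split_ifs <;> norm_num
lemma ind_le_one (b : Bool) : ind b ≤ 1 := by unfold ind; split_ifs <;> norm_num

section game

variable {R Q₁ Q₂ A₁ A₂ : Type} [Fintype R] [Nonempty R]
    [Fintype Q₁] [DecidableEq Q₁] [Fintype Q₂] [DecidableEq Q₂]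
    [Fintype A₁] [Nonempty A₁] [Fintype A₂] [Nonempty A₂]

lemma value_det (f : R → Q₁ × Q₂) (V : R → A₁ → A₂ → Bool) (P₁ : Q₁ → A₁) (P₂ : Q₂ → A₂) :
    ∑ r, ind (V r (P₁ (f r).1) (P₂ (f r).2)) ≤ gameValue f V * Fintype.card R := by
  have hR : (0 : ℝ) < Fintype.card R := by exact_mod_cast Fintype.card_pos
  rw [← div_le_iff₀ hR]
  have := Finset.le_sup' (s := (Finset.univ : Finset ((Q₁ → A₁) × (Q₂ → A₂))))
    (fun P => ((Finset.univ.filter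
      (fun r : R => V r (P.1 (f r).1) (P.2 (f r).2) = true)).card : ℝ) /
        (Fintype.card R : ℝ)) (Finset.mem_univ (P₁, P₂))
  refine le_trans (le_of_eq ?_) this
  simp [ind]

lemma value_rand (f : R → Q₁ × Q₂) (V : R → A₁ → A₂ → Bool)
    (α : Q₁ → A₁ → ℝ) (β : Q₂ → A₂ → ℝ)
    (hα0 : ∀ x a, 0 ≤ α x a) (hα1 : ∀ x, ∑ a, α x a = 1)
    (hβ0 : ∀ x a, 0 ≤ β x a) (hβ1 : ∀ x, ∑ a, β x a = 1) :
    ∑ r, ∑ a, ∑ b, α (f r).1 a * β (f r).2 b * ind (V r a b)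
      ≤ gameValue f V * Fintype.card R := by
  obtain ⟨P₁, h₁⟩ := derand α hα0 hα1
    (fun x a => ∑ r, if (f r).1 = x then ∑ b, β (f r).2 b * ind (V r a b) else 0)
  obtain ⟨P₂, h₂⟩ := derand β hβ0 hβ1
    (fun y b => ∑ r, if (f r).2 = y then ind (V r (P₁ (f r).1) b) else 0)
  refine le_trans (le_trans (le_of_eq ?_) h₁) (le_trans (le_trans (le_of_eq ?_) h₂)
    (le_trans (le_of_eq ?_) (value_det f V P₁ P₂)))
  · simp only [Finset.mul_sum]
    symm
    calc _ = ∑ x, ∑ r, ∑ a, α x a * (if (f r).1 = x then ∑ b, β (f r).2 b * ind (V r a b) else 0) :=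
          Finset.sum_congr rfl fun x _ => Finset.sum_comm
      _ = ∑ r, ∑ x, ∑ a, α x a * (if (f r).1 = x then ∑ b, β (f r).2 b * ind (V r a b) else 0) :=
          Finset.sum_comm
      _ = _ := by
          refine Finset.sum_congr rfl fun r _ => ?_
          rw [Finset.sum_comm]
          refine Finset.sum_congr rfl fun a _ => ?_
          simp [Finset.mul_sum, mul_assoc]
  · rw [Finset.sum_comm]
    simp only [Finset.mul_sum]
    symm
    calc _ = ∑ x, ∑ r, ∑ a, β x a * (if (f r).2 = x then ind (V r (P₁ (f r).1) a) else 0) :=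
          Finset.sum_congr rfl fun x _ => Finset.sum_comm
      _ = ∑ r, ∑ x, ∑ a, β x a * (if (f r).2 = x then ind (V r (P₁ (f r).1) a) else 0) :=
          Finset.sum_comm
      _ = _ := by
          refine Finset.sum_congr rfl fun r _ => ?_
          rw [Finset.sum_comm]
          simp
  · rw [Finset.sum_comm]
    simp

end game

/-- The number of orderings in which `z₀` is first among `C`. -/
lemma perm_first {Z : Type} [Fintype Z] [DecidableEq Z] (C : Finset Z) (z₀ : Z) (hz : z₀ ∈ C) :
    (#{π : Z ≃ Fin (Fintype.card Z) | ∀ z ∈ C, π z₀ ≤ π z} : ℝ) * #C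
      = Fintype.card (Z ≃ Fin (Fintype.card Z)) := by
  have key : ∀ z₁ ∈ C, #{π : Z ≃ Fin (Fintype.card Z) | ∀ z ∈ C, π z₁ ≤ π z}
      = #{π : Z ≃ Fin (Fintype.card Z) | ∀ z ∈ C, π z₀ ≤ π z} := by
    intro z₁ h₁
    have hsw : ∀ z ∈ C, Equiv.swap z₀ z₁ z ∈ C := by
      intro z h
      by_cases h0 : z = z₀
      · subst h0; simpa using h₁
      by_cases h1 : z = z₁
      · subst h1; simpa using hz
      rwa [Equiv.swap_apply_of_ne_of_ne h0 h1]
    refine Finset.card_nbij' (fun π => (Equiv.swap z₀ z₁).trans π)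
      (fun π => (Equiv.swap z₀ z₁).trans π) ?_ ?_ ?_ ?_
    · intro π hπ
      simp only [coe_filter, mem_univ, true_and, Set.mem_ofPred_eq] at hπ ⊢
      intro z h
      simpa using hπ _ (hsw z h)
    · intro π hπ
      simp only [coe_filter, mem_univ, true_and, Set.mem_ofPred_eq] at hπ ⊢
      intro z h
      simpa using hπ _ (hsw z h)
    · intro π _; ext z; simp
    · intro π _; ext z; simp
  have tot : ∑ z₁ ∈ C, #{π : Z ≃ Fin (Fintype.card Z) | ∀ z ∈ C, π z₁ ≤ π z}
      = Fintype.card (Z ≃ Fin (Fintype.card Z)) := by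
    simp only [Finset.card_filter]
    rw [Finset.sum_comm]
    have h1 : Fintype.card (Z ≃ Fin (Fintype.card Z)) = ∑ _π : Z ≃ Fin (Fintype.card Z), 1 := by
      rw [Finset.sum_const, smul_eq_mul, mul_one, Finset.card_univ]
    rw [h1]
    refine Finset.sum_congr rfl fun π _ => ?_
    obtain ⟨m, hm, hmin⟩ := Finset.exists_min_image C (fun z => π z) ⟨z₀, hz⟩
    rw [Finset.sum_eq_single m]
    · rw [if_pos hmin]
    · intro b hb hne
      rw [if_neg]
      intro h
      exact hne (π.injective (le_antisymm (h m hm) (hmin b hb)))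
    · intro h; exact absurd hm h
  rw [Finset.sum_congr rfl key, Finset.sum_const, smul_eq_mul] at tot
  rw [← tot]; push_cast; ring

end PR

namespace PR
open Finset

section game

variable {R Q₁ Q₂ A₁ A₂ : Type} [Fintype R] [Nonempty R]
    [Fintype Q₁] [DecidableEq Q₁] [Fintype Q₂] [DecidableEq Q₂]
    [Fintype A₁] [Nonempty A₁] [Fintype A₂] [Nonempty A₂]

/-- Acceptance probability on seed `r` of the randomized strategies with shared string `u`. -/
noncomputable def win {U : Type} (f : R → Q₁ × Q₂) (V : R → A₁ → A₂ → Bool)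
    (α : U → Q₁ → A₁ → ℝ) (β : U → Q₂ → A₂ → ℝ) (r : R) (u : U) : ℝ :=
  ∑ a, ∑ b, α u (f r).1 a * β u (f r).2 b * ind (V r a b)

lemma win_nonneg {U : Type} (f : R → Q₁ × Q₂) (V : R → A₁ → A₂ → Bool)
    (α : U → Q₁ → A₁ → ℝ) (β : U → Q₂ → A₂ → ℝ)
    (hα0 : ∀ u x a, 0 ≤ α u x a) (hβ0 : ∀ u x a, 0 ≤ β u x a) (r : R) (u : U) :
    0 ≤ win f V α β r u :=
  Finset.sum_nonneg fun a _ => Finset.sum_nonneg fun b _ =>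
    mul_nonneg (mul_nonneg (hα0 _ _ _) (hβ0 _ _ _)) (ind_nonneg _)

lemma win_le_one {U : Type} (f : R → Q₁ × Q₂) (V : R → A₁ → A₂ → Bool)
    (α : U → Q₁ → A₁ → ℝ) (β : U → Q₂ → A₂ → ℝ)
    (hα0 : ∀ u x a, 0 ≤ α u x a) (hα1 : ∀ u x, ∑ a, α u x a = 1)
    (hβ0 : ∀ u x a, 0 ≤ β u x a) (hβ1 : ∀ u x, ∑ a, β u x a = 1) (r : R) (u : U) :
    win f V α β r u ≤ 1 := by
  calc win f V α β r u ≤ ∑ a, ∑ b, α u (f r).1 a * β u (f r).2 b := by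
        refine Finset.sum_le_sum fun a _ => Finset.sum_le_sum fun b _ => ?_
        exact mul_le_of_le_one_right (mul_nonneg (hα0 _ _ _) (hβ0 _ _ _)) (ind_le_one _)
    _ = 1 := by
        simp only [← Finset.mul_sum, hβ1, mul_one, hα1]

lemma corr_nat {U : Type} [Fintype U] [DecidableEq U]
    (f : R → Q₁ × Q₂) (V : R → A₁ → A₂ → Bool)
    (α : U → Q₁ → A₁ → ℝ) (β : U → Q₂ → A₂ → ℝ)
    (hα0 : ∀ u x a, 0 ≤ α u x a) (hα1 : ∀ u x, ∑ a, α u x a = 1)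
    (hβ0 : ∀ u x a, 0 ≤ β u x a) (hβ1 : ∀ u x, ∑ a, β u x a = 1)
    (M : ℕ) (hM : 0 < M) (m : Q₁ → U → ℕ) (n : Q₂ → U → ℕ)
    (hm : ∀ x, ∑ u, m x u = M) (hn : ∀ y, ∑ u, n y u = M) :
    ∑ r, ∑ u, (m (f r).1 u : ℝ) * win f V α β r u ≤
      M * (gameValue f V * Fintype.card R)
        + 2 * ∑ r, ∑ u, |(m (f r).1 u : ℝ) - n (f r).2 u| := by
  classical
  let Z := U × Fin M
  let Pm := Z ≃ Fin (Fintype.card Z)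
  let A : Q₁ → Finset Z := fun x => univ.filter (fun z => (z.2 : ℕ) < m x z.1)
  let B : Q₂ → Finset Z := fun y => univ.filter (fun z => (z.2 : ℕ) < n y z.1)
  have hmle : ∀ x u, m x u ≤ M := fun x u => by
    rw [← hm x]; exact Finset.single_le_sum (f := m x) (fun _ _ => Nat.zero_le _) (mem_univ u)
  have hnle : ∀ x u, n x u ≤ M := fun x u => by
    rw [← hn x]; exact Finset.single_le_sum (f := n x) (fun _ _ => Nat.zero_le _) (mem_univ u)
  -- sums over threshold sets
  have hsum : ∀ (k : U → ℕ) (hk : ∀ u, k u ≤ M) (F : U → ℝ),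
      ∑ z ∈ univ.filter (fun z : Z => (z.2 : ℕ) < k z.1), F z.1 = ∑ u, (k u : ℝ) * F u := by
    intro k hk F
    rw [Finset.sum_filter, Fintype.sum_prod_type]
    refine Finset.sum_congr rfl fun u _ => ?_
    simp only
    rw [← Finset.sum_filter, Finset.sum_const, nsmul_eq_mul, Fin.card_filter_val_lt,
      min_eq_right (hk u)]
  have hcardA : ∀ x, ((A x).card : ℝ) = M := by
    intro x
    have := hsum (m x) (hmle x) (fun _ => 1)
    simp only [Finset.sum_const, nsmul_eq_mul, mul_one] at this
    rw [this]; exact_mod_cast hm x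
  have hcardB : ∀ x, ((B x).card : ℝ) = M := by
    intro x
    have := hsum (n x) (hnle x) (fun _ => 1)
    simp only [Finset.sum_const, nsmul_eq_mul, mul_one] at this
    rw [this]; exact_mod_cast hn x
  have hMR : (0 : ℝ) < M := by exact_mod_cast hM
  have hAne : ∀ x, (A x).Nonempty := fun x => by
    rw [← Finset.card_pos]; have := hcardA x; rw [← this] at hMR; exact_mod_cast hMR
  have hBne : ∀ x, (B x).Nonempty := fun x => by
    rw [← Finset.card_pos]; have := hcardB x; rw [← this] at hMR; exact_mod_cast hMR
  have hinter : ∀ x y, A x ∩ B y =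
      univ.filter (fun z : Z => (z.2 : ℕ) < (fun u => min (m x u) (n y u)) z.1) := by
    intro x y; ext z; simp [A, B]
  choose p₁ hp₁ hp₁' using fun (π : Pm) (x : Q₁) => Finset.exists_min_image (A x) (fun z => π z) (hAne x)
  choose p₂ hp₂ hp₂' using fun (π : Pm) (y : Q₂) => Finset.exists_min_image (B y) (fun z => π z) (hBne y)
  let w : Pm → R → ℝ := fun π r => ∑ a, ∑ b, α (p₁ π (f r).1).1 (f r).1 a *
    β (p₂ π (f r).2).1 (f r).2 b * ind (V r a b)
  have hw0 : ∀ π r, 0 ≤ w π r := fun π r => Finset.sum_nonneg fun a _ => Finset.sum_nonneg fun b _ =>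
    mul_nonneg (mul_nonneg (hα0 _ _ _) (hβ0 _ _ _)) (ind_nonneg _)
  have hval : ∀ π, ∑ r, w π r ≤ gameValue f V * Fintype.card R := fun π =>
    value_rand f V (fun x a => α (p₁ π x).1 x a) (fun y b => β (p₂ π y).1 y b)
      (fun _ _ => hα0 _ _ _) (fun _ => hα1 _ _) (fun _ _ => hβ0 _ _ _) (fun _ => hβ1 _ _)
  have hlow : ∀ π r, ∑ z ∈ A (f r).1 ∩ B (f r).2,
      (if ∀ z' ∈ A (f r).1 ∪ B (f r).2, π z ≤ π z' then win f V α β r z.1 else 0) ≤ w π r := by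
    intro π r
    by_cases hex : ∃ z ∈ A (f r).1 ∩ B (f r).2, ∀ z' ∈ A (f r).1 ∪ B (f r).2, π z ≤ π z'
    · obtain ⟨z, hz, hmin⟩ := hex
      rw [Finset.mem_inter] at hz
      have e1 : p₁ π (f r).1 = z := π.injective (le_antisymm (hp₁' π _ z hz.1)
        (hmin _ (Finset.mem_union_left _ (hp₁ π _))))
      have e2 : p₂ π (f r).2 = z := π.injective (le_antisymm (hp₂' π _ z hz.2)
        (hmin _ (Finset.mem_union_right _ (hp₂ π _))))
      rw [Finset.sum_eq_single z]
      · rw [if_pos hmin]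
        simp only [w, e1, e2, win]; exact le_rfl
      · intro b hb hne
        rw [if_neg]
        intro h
        rw [Finset.mem_inter] at hb
        exact hne (π.injective (le_antisymm (h z (Finset.mem_union_left _ hz.1))
          (hmin b (Finset.mem_union_left _ hb.1))))
      · intro h; exact absurd (Finset.mem_inter.2 hz) h
    · rw [Finset.sum_eq_zero]
      · exact hw0 _ _
      · intro z hz; rw [if_neg]; intro h; exact hex ⟨z, hz, h⟩
  have hN : (0 : ℝ) < Fintype.card Pm := by
    have : Nonempty Pm := ⟨Fintype.equivFin Z⟩
    exact_mod_cast Fintype.card_pos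
  -- per seed estimate
  have hseed : ∀ r, (Fintype.card Pm : ℝ) * (∑ u, (m (f r).1 u : ℝ) * win f V α β r u
      - 2 * ∑ u, |(m (f r).1 u : ℝ) - n (f r).2 u|) ≤ M * ∑ π, w π r := by
    intro r
    set x := (f r).1 with hx
    set y := (f r).2 with hy
    set G := ∑ u, ((min (m x u) (n y u) : ℕ) : ℝ) * win f V α β r u with hG
    set dl := ∑ u, |(m x u : ℝ) - n y u| with hdl
    set C := A x ∪ B y with hC
    have h1 : (Fintype.card Pm : ℝ) * G ≤ #C * ∑ π, w π r := by
      calc (Fintype.card Pm : ℝ) * G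
          = ∑ z ∈ A x ∩ B y, (Fintype.card Pm : ℝ) * win f V α β r z.1 := by
            rw [hinter, hsum (fun u => min (m x u) (n y u))
              (fun u => (min_le_left _ _).trans (hmle x u))
              (fun u => (Fintype.card Pm : ℝ) * win f V α β r u), hG, Finset.mul_sum]
            refine Finset.sum_congr rfl fun u _ => ?_
            ring
        _ = ∑ z ∈ A x ∩ B y, #C * ∑ π : Pm, (if ∀ z' ∈ C, π z ≤ π z' then win f V α β r z.1 else 0) := by
            refine Finset.sum_congr rfl fun z hz => ?_
            have hzC : z ∈ C := Finset.mem_union_left _ (Finset.mem_inter.1 hz).1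
            have := perm_first C z hzC
            rw [← Finset.sum_filter, Finset.sum_const, nsmul_eq_mul, ← mul_assoc, ← this]
            ring
        _ = #C * ∑ π : Pm, ∑ z ∈ A x ∩ B y, (if ∀ z' ∈ C, π z ≤ π z' then win f V α β r z.1 else 0) := by
            rw [← Finset.mul_sum, Finset.sum_comm]
        _ ≤ #C * ∑ π, w π r := by
            refine mul_le_mul_of_nonneg_left (Finset.sum_le_sum fun π _ => hlow π r) (Nat.cast_nonneg _)
    have hCc : (#C : ℝ) = M + ∑ u, ((m x u : ℝ) - ((min (m x u) (n y u) : ℕ) : ℝ)) := by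
      have h2 : (#C : ℝ) + #(A x ∩ B y) = M + M := by
        rw [← hcardA x]; nth_rewrite 2 [hcardA x]; rw [← hcardB y]
        exact_mod_cast Finset.card_union_add_card_inter (A x) (B y)
      have h3 : (#(A x ∩ B y) : ℝ) = ∑ u, ((min (m x u) (n y u) : ℕ) : ℝ) := by
        have := hsum (fun u => min (m x u) (n y u))
              (fun u => (min_le_left _ _).trans (hmle x u)) (fun _ => 1)
        rw [← hinter] at this
        simpa using this
      have h4 : ∑ u, (m x u : ℝ) = M := by exact_mod_cast hm x
      rw [Finset.sum_sub_distrib, h4, ← h3]; linarith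
    set d := ∑ u, ((m x u : ℝ) - ((min (m x u) (n y u) : ℕ) : ℝ)) with hd
    have hd0 : 0 ≤ d := Finset.sum_nonneg fun u _ => by
      rw [sub_nonneg]; exact_mod_cast min_le_left _ _
    have hmin : ∀ u, (m x u : ℝ) - ((min (m x u) (n y u) : ℕ) : ℝ) ≤ |(m x u : ℝ) - n y u| := by
      intro u
      rw [Nat.cast_min]
      rcases min_cases (m x u : ℝ) (n y u) with ⟨h, _⟩ | ⟨h, _⟩ <;> rw [h]
      · simp
      · exact le_abs_self _
    have hddl : d ≤ dl := Finset.sum_le_sum fun u _ => hmin u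
    have hGM : G ≤ M := by
      have h4 : ∑ u, (m x u : ℝ) = M := by exact_mod_cast hm x
      rw [← h4]
      refine Finset.sum_le_sum fun u _ => ?_
      calc _ ≤ ((min (m x u) (n y u) : ℕ) : ℝ) * 1 :=
            mul_le_mul_of_nonneg_left (win_le_one f V α β hα0 hα1 hβ0 hβ1 r u) (Nat.cast_nonneg _)
        _ ≤ _ := by rw [mul_one]; exact_mod_cast min_le_left _ _
    have hmG : ∑ u, (m x u : ℝ) * win f V α β r u ≤ G + dl := by
      rw [hG, hdl, ← Finset.sum_add_distrib]
      refine Finset.sum_le_sum fun u _ => ?_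
      have a1 := win_le_one f V α β hα0 hα1 hβ0 hβ1 r u
      have a0 := win_nonneg f V α β hα0 hβ0 r u
      have := hmin u
      have : ((m x u : ℝ) - ((min (m x u) (n y u) : ℕ) : ℝ)) * win f V α β r u ≤
          |(m x u : ℝ) - n y u| * 1 :=
        mul_le_mul this a1 a0 (abs_nonneg _)
      linarith
    set Wr := ∑ π, w π r
    have hWr0 : 0 ≤ Wr := Finset.sum_nonneg fun π _ => hw0 π r
    set N := (Fintype.card Pm : ℝ)
    rw [hCc] at h1
    by_contra hcon
    push Not at hcon
    -- N (G - d) > M Wr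
    have h5 : M * Wr < N * (G - d) := lt_of_lt_of_le hcon (mul_le_mul_of_nonneg_left (by linarith) hN.le)
    have h6 : M * Wr * (M + d) < N * (G - d) * (M + d) := mul_lt_mul_of_pos_right h5 (by linarith)
    have h7 : N * G * M ≤ (M + d) * Wr * M := mul_le_mul_of_nonneg_right h1 hMR.le
    have h8 : 0 ≤ N * (d * (M - G) + d ^ 2) := mul_nonneg hN.le
      (add_nonneg (mul_nonneg hd0 (by linarith)) (sq_nonneg _))
    nlinarith
  have hfin : (Fintype.card Pm : ℝ) * (∑ r, (∑ u, (m (f r).1 u : ℝ) * win f V α β r u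
      - 2 * ∑ u, |(m (f r).1 u : ℝ) - n (f r).2 u|)) ≤
      (Fintype.card Pm : ℝ) * (M * (gameValue f V * Fintype.card R)) := by
    calc _ ≤ ∑ r, M * ∑ π, w π r := by
          rw [Finset.mul_sum]; exact Finset.sum_le_sum fun r _ => hseed r
      _ = M * ∑ π, ∑ r, w π r := by rw [← Finset.mul_sum, Finset.sum_comm]
      _ ≤ M * ∑ _π : Pm, gameValue f V * Fintype.card R :=
          mul_le_mul_of_nonneg_left (Finset.sum_le_sum fun π _ => hval π) hMR.le
      _ = _ := by rw [Finset.sum_const, nsmul_eq_mul, Finset.card_univ]; ring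
  have := le_of_mul_le_mul_left hfin hN
  rw [Finset.sum_sub_distrib, ← Finset.mul_sum] at this
  linarith

lemma common_denom {ι : Type} [Fintype ι] (μ : ι → ℝ) (h0 : ∀ i, 0 ≤ μ i)
    (hq : ∀ i, ∃ q : ℚ, μ i = q) : ∃ M : ℕ, 0 < M ∧ ∀ i, ∃ k : ℕ, (k : ℝ) = M * μ i := by
  classical
  choose q hq using hq
  refine ⟨∏ i, (q i).den, Finset.prod_pos fun i _ => (q i).den_pos, fun i => ?_⟩
  have hq0 : 0 ≤ q i := by have := h0 i; rw [hq i] at this; exact_mod_cast this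
  refine ⟨(∏ j ∈ univ.erase i, (q j).den) * (q i).num.toNat, ?_⟩
  rw [← Finset.mul_prod_erase univ _ (mem_univ i), hq i]
  have h1 : ((q i).num.toNat : ℝ) = (q i).den * (q i : ℝ) := by
    have h2 : ((q i).num.toNat : ℤ) = (q i).num := Int.toNat_of_nonneg (Rat.num_nonneg.2 hq0)
    have h3 : ((q i).num.toNat : ℚ) = (q i).den * q i := by
      rw [Rat.den_mul_eq_num]; exact_mod_cast h2
    exact_mod_cast congrArg (fun z : ℚ => (z : ℝ)) h3
  push_cast
  rw [h1]; ring

/-- Correlated sampling. -/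
lemma corr {U : Type} [Fintype U]
    (f : R → Q₁ × Q₂) (V : R → A₁ → A₂ → Bool)
    (α : U → Q₁ → A₁ → ℝ) (β : U → Q₂ → A₂ → ℝ)
    (hα0 : ∀ u x a, 0 ≤ α u x a) (hα1 : ∀ u x, ∑ a, α u x a = 1)
    (hβ0 : ∀ u x a, 0 ≤ β u x a) (hβ1 : ∀ u x, ∑ a, β u x a = 1)
    (μ : Q₁ → U → ℝ) (ν : Q₂ → U → ℝ)
    (hμ0 : ∀ x u, 0 ≤ μ x u) (hν0 : ∀ x u, 0 ≤ ν x u)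
    (hμq : ∀ x u, ∃ q : ℚ, μ x u = q) (hνq : ∀ x u, ∃ q : ℚ, ν x u = q)
    (hμ1 : ∀ x, ∑ u, μ x u = 1) (hν1 : ∀ y, ∑ u, ν y u = 1) :
    ∑ r, ∑ u, μ (f r).1 u * win f V α β r u ≤
      gameValue f V * Fintype.card R + 2 * ∑ r, ∑ u, |μ (f r).1 u - ν (f r).2 u| := by
  classical
  obtain ⟨M, hM, hk⟩ := common_denom (ι := (Q₁ × U) ⊕ (Q₂ × U))
    (Sum.elim (fun p => μ p.1 p.2) (fun p => ν p.1 p.2))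
    (by rintro (p | p) <;> simp [hμ0, hν0]) (by rintro (p | p) <;> simp [hμq, hνq])
  choose k hk using hk
  have hMR : (0 : ℝ) < M := by exact_mod_cast hM
  have e1 : ∀ x u, (k (Sum.inl (x, u)) : ℝ) = M * μ x u := fun x u => hk _
  have e2 : ∀ x u, (k (Sum.inr (x, u)) : ℝ) = M * ν x u := fun x u => hk _
  have := corr_nat f V α β hα0 hα1 hβ0 hβ1 M hM (fun x u => k (Sum.inl (x, u)))
    (fun x u => k (Sum.inr (x, u)))
    (fun x => by
      have : ((∑ u, k (Sum.inl (x, u)) : ℕ) : ℝ) = M := by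
        push_cast; simp only [e1]; rw [← Finset.mul_sum, hμ1, mul_one]
      exact_mod_cast this)
    (fun x => by
      have : ((∑ u, k (Sum.inr (x, u)) : ℕ) : ℝ) = M := by
        push_cast; simp only [e2]; rw [← Finset.mul_sum, hν1, mul_one]
      exact_mod_cast this)
  simp only [e1, e2, ← mul_sub, abs_mul, abs_of_pos hMR, mul_assoc, ← Finset.mul_sum] at this
  refine le_of_mul_le_mul_left (this.trans (le_of_eq ?_)) hMR
  ring

end game
end PR

namespace PR
open Finset

lemma half_lemma {R U X : Type} [Fintype R] [Nonempty R] [Fintype U] [Nonempty U]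
    [DecidableEq X] (q : R → X) (B : U → R → ℝ) (hB0 : ∀ u r, 0 ≤ B u r)
    (hBq : ∀ u r, B u r ∈ (Rat.castHom ℝ).fieldRange) :
    ∃ μ : X → U → ℝ, (∀ x u, 0 ≤ μ x u) ∧ (∀ x u, ∃ p : ℚ, μ x u = p) ∧
      (∀ x, ∑ u, μ x u = 1) ∧
      ∑ r, ∑ u, |B u r - μ (q r) u / Fintype.card R| ≤
        (∑ r, ∑ u, |B u r - (∑ r' with q r' = q r, B u r') / #{r' | q r' = q r}|)
        + ∑ r, |∑ u, B u r - 1 / Fintype.card R| := by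
  classical
  let B1 : X → U → ℝ := fun x u => ∑ r' with q r' = x, B u r'
  let Bx : X → ℝ := fun x => ∑ u, B1 x u
  let c : X → ℝ := fun x => (#{r' | q r' = x} : ℝ)
  obtain ⟨u₀⟩ := ‹Nonempty U›
  let μ : X → U → ℝ := fun x u => if Bx x = 0 then (if u = u₀ then 1 else 0) else B1 x u / Bx x
  have hB10 : ∀ x u, 0 ≤ B1 x u := fun x u => Finset.sum_nonneg fun r _ => hB0 u r
  have hBx0 : ∀ x, 0 ≤ Bx x := fun x => Finset.sum_nonneg fun u _ => hB10 x u
  have hμ0 : ∀ x u, 0 ≤ μ x u := by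
    intro x u; simp only [μ]; split_ifs
    · norm_num
    · norm_num
    · exact div_nonneg (hB10 _ _) (hBx0 _)
  have hμ1 : ∀ x, ∑ u, μ x u = 1 := by
    intro x
    by_cases h : Bx x = 0
    · simp [μ, h]
    · simp only [μ, if_neg h]; rw [← Finset.sum_div]; exact div_self h
  have hmul : ∀ x u, B1 x u = Bx x * μ x u := by
    intro x u
    by_cases h : Bx x = 0
    · rw [h, zero_mul]
      exact (Finset.sum_eq_zero_iff_of_nonneg (fun u _ => hB10 x u)).1 h u (mem_univ u)
    · simp only [μ, if_neg h]; field_simp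
  have hc : ∀ r, 0 < c (q r) := fun r => by
    simp only [c]; exact_mod_cast Finset.card_pos.2 ⟨r, by simp⟩
  refine ⟨μ, hμ0, ?_, hμ1, ?_⟩
  · intro x u
    have : μ x u ∈ (Rat.castHom ℝ).fieldRange := by
      have hB1q : ∀ x u, B1 x u ∈ (Rat.castHom ℝ).fieldRange := fun x u =>
        sum_mem fun r _ => hBq u r
      simp only [μ]; split_ifs
      · exact one_mem _
      · exact zero_mem _
      · exact div_mem (hB1q _ _) (sum_mem fun u _ => hB1q _ _)
    obtain ⟨p, hp⟩ := this
    exact ⟨p, hp.symm⟩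
  · have h1 : ∀ r, ∑ u, |B1 (q r) u / c (q r) - μ (q r) u / Fintype.card R|
        = |Bx (q r) / c (q r) - 1 / Fintype.card R| := by
      intro r
      have : ∀ u, |B1 (q r) u / c (q r) - μ (q r) u / Fintype.card R|
          = μ (q r) u * |Bx (q r) / c (q r) - 1 / Fintype.card R| := by
        intro u
        rw [← abs_of_nonneg (hμ0 (q r) u), ← abs_mul, abs_of_nonneg (hμ0 (q r) u), hmul]
        congr 1; ring
      simp only [this]
      rw [← Finset.sum_mul, hμ1, one_mul]
    have h2 : ∀ r, |Bx (q r) / c (q r) - 1 / Fintype.card R| ≤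
        ∑ r' with q r' = q r, |∑ u, B u r' - 1 / Fintype.card R| / c (q r) := by
      intro r
      have e : Bx (q r) / c (q r) - 1 / Fintype.card R
          = (∑ r' with q r' = q r, (∑ u, B u r' - 1 / Fintype.card R)) / c (q r) := by
        rw [Finset.sum_sub_distrib, Finset.sum_const, nsmul_eq_mul, Finset.sum_comm, sub_div]
        have := (hc r).ne'
        congr 1
        simp only [c] at this ⊢
        field_simp
      rw [e, abs_div, abs_of_pos (hc r), ← Finset.sum_div]
      exact div_le_div_of_nonneg_right (Finset.abs_sum_le_sum_abs _ _) (hc r).le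
    have h3 : ∑ r, ∑ r' with q r' = q r, |∑ u, B u r' - 1 / Fintype.card R| / c (q r)
        = ∑ r, |∑ u, B u r - 1 / Fintype.card R| := by
      simp only [Finset.sum_filter]
      rw [Finset.sum_comm]
      refine Finset.sum_congr rfl fun r' _ => ?_
      rw [← Finset.sum_filter]
      have : ∀ r ∈ univ.filter (fun r => q r' = q r),
          |∑ u, B u r' - 1 / Fintype.card R| / c (q r) =
          |∑ u, B u r' - 1 / Fintype.card R| / c (q r') := by
        intro r hr
        rw [(Finset.mem_filter.1 hr).2]
      rw [Finset.sum_congr rfl this, Finset.sum_const, nsmul_eq_mul]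
      have e : (#{r | q r' = q r} : ℝ) = c (q r') := by
        simp only [c, eq_comm]
      rw [e]
      have := (hc r').ne'
      field_simp
    calc ∑ r, ∑ u, |B u r - μ (q r) u / Fintype.card R|
        ≤ ∑ r, (∑ u, |B u r - B1 (q r) u / c (q r)| +
            ∑ u, |B1 (q r) u / c (q r) - μ (q r) u / Fintype.card R|) := by
          refine Finset.sum_le_sum fun r _ => ?_
          rw [← Finset.sum_add_distrib]
          exact Finset.sum_le_sum fun u _ => abs_sub_le _ _ _
      _ = ∑ r, ∑ u, |B u r - B1 (q r) u / c (q r)| +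
            ∑ r, |Bx (q r) / c (q r) - 1 / Fintype.card R| := by
          rw [Finset.sum_add_distrib]; simp only [h1]
      _ ≤ _ := by
          refine add_le_add le_rfl ?_
          rw [← h3]
          exact Finset.sum_le_sum fun r _ => h2 r

section game
variable {R Q₁ Q₂ A₁ A₂ : Type} [Fintype R] [Nonempty R]
    [Fintype Q₁] [DecidableEq Q₁] [Fintype Q₂] [DecidableEq Q₂]
    [Fintype A₁] [Nonempty A₁] [Fintype A₂] [Nonempty A₂]

lemma embed {U : Type} [Fintype U] [Nonempty U]
    (f : R → Q₁ × Q₂) (V : R → A₁ → A₂ → Bool)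
    (α : U → Q₁ → A₁ → ℝ) (β : U → Q₂ → A₂ → ℝ)
    (hα0 : ∀ u x a, 0 ≤ α u x a) (hα1 : ∀ u x, ∑ a, α u x a = 1)
    (hβ0 : ∀ u x a, 0 ≤ β u x a) (hβ1 : ∀ u x, ∑ a, β u x a = 1)
    (B : U → R → ℝ) (hB0 : ∀ u r, 0 ≤ B u r)
    (hBq : ∀ u r, B u r ∈ (Rat.castHom ℝ).fieldRange) (δ : ℝ)
    (H1 : ∑ r, ∑ u, |B u r - (∑ r' with (f r').1 = (f r).1, B u r') /
      #{r' | (f r').1 = (f r).1}| ≤ δ)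
    (H2 : ∑ r, ∑ u, |B u r - (∑ r' with (f r').2 = (f r).2, B u r') /
      #{r' | (f r').2 = (f r).2}| ≤ δ)
    (H3 : ∑ r, |∑ u, B u r - 1 / Fintype.card R| ≤ δ) :
    ∑ r, ∑ u, B u r * win f V α β r u ≤ gameValue f V + 10 * δ := by
  obtain ⟨μ, hμ0, hμq, hμ1, hμ⟩ := half_lemma (fun r => (f r).1) B hB0 hBq
  obtain ⟨ν, hν0, hνq, hν1, hν⟩ := half_lemma (fun r => (f r).2) B hB0 hBq
  have hc := corr f V α β hα0 hα1 hβ0 hβ1 μ ν hμ0 hν0 hμq hνq hμ1 hν1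
  have hR : (0 : ℝ) < Fintype.card R := by exact_mod_cast Fintype.card_pos
  set K := (Fintype.card R : ℝ)
  have hX : ∑ r, ∑ u, |B u r - μ (f r).1 u / K| ≤ 2 * δ := by linarith
  have hY : ∑ r, ∑ u, |B u r - ν (f r).2 u / K| ≤ 2 * δ := by linarith
  have hXY : ∑ r, ∑ u, |μ (f r).1 u - ν (f r).2 u| ≤ K * (4 * δ) := by
    calc _ = K * ∑ r, ∑ u, |μ (f r).1 u / K - ν (f r).2 u / K| := by
          simp only [Finset.mul_sum]
          refine Finset.sum_congr rfl fun r _ => Finset.sum_congr rfl fun u _ => ?_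
          rw [← sub_div, abs_div, abs_of_pos hR]; field_simp
      _ ≤ K * ∑ r, ∑ u, (|B u r - μ (f r).1 u / K| + |B u r - ν (f r).2 u / K|) := by
          refine mul_le_mul_of_nonneg_left (Finset.sum_le_sum fun r _ =>
            Finset.sum_le_sum fun u _ => ?_) hR.le
          rw [abs_sub_comm (B u r) (μ _ _ / K)]
          exact abs_sub_le _ _ _
      _ ≤ _ := by
          refine mul_le_mul_of_nonneg_left ?_ hR.le
          simp only [Finset.sum_add_distrib]
          linarith
  have h1 : ∑ r, ∑ u, B u r * win f V α β r u ≤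
      (∑ r, ∑ u, μ (f r).1 u * win f V α β r u) / K + ∑ r, ∑ u, |B u r - μ (f r).1 u / K| := by
    rw [Finset.sum_div, ← Finset.sum_add_distrib]
    refine Finset.sum_le_sum fun r _ => ?_
    rw [Finset.sum_div, ← Finset.sum_add_distrib]
    refine Finset.sum_le_sum fun u _ => ?_
    have a1 := win_le_one f V α β hα0 hα1 hβ0 hβ1 r u
    have a0 := win_nonneg f V α β hα0 hβ0 r u
    have a2 : (B u r - μ (f r).1 u / K) * win f V α β r u ≤ |B u r - μ (f r).1 u / K| * 1 :=
      mul_le_mul (le_abs_self _) a1 a0 (abs_nonneg _)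
    have a3 : μ (f r).1 u * win f V α β r u / K = μ (f r).1 u / K * win f V α β r u := by ring
    rw [a3]; linarith
  have h2 : (∑ r, ∑ u, μ (f r).1 u * win f V α β r u) / K ≤ gameValue f V + 8 * δ := by
    rw [div_le_iff₀ hR]; nlinarith
  linarith

end game
end PR

namespace PR
open Finset

lemma pinsker {α : Type} [Fintype α] (q p : α → ℝ) (hq0 : ∀ a, 0 ≤ q a) (hp0 : ∀ a, 0 ≤ p a)
    (hq1 : ∑ a, q a = 1) (hp1 : ∑ a, p a = 1) (hqp : ∀ a, 0 < q a → 0 < p a) :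
    (∑ a, |q a - p a|) ^ 2 ≤ 4 * ∑ a, q a * Real.log (q a / p a) := by
  have h1 : ∀ a, 2 * q a - 2 * (√(q a) * √(p a)) ≤ q a * Real.log (q a / p a) := by
    intro a
    rcases (hq0 a).eq_or_lt with h | h
    · simp [← h]
    · have hp := hqp a h
      have hsq := Real.sqrt_pos.2 h
      have hsp := Real.sqrt_pos.2 hp
      have e1 : Real.log (q a / p a) = - (2 * Real.log (√(p a) / √(q a))) := by
        rw [Real.log_div hsp.ne' hsq.ne', Real.log_sqrt hp.le, Real.log_sqrt h.le,
          Real.log_div h.ne' hp.ne']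
        ring
      have e2 := Real.log_le_sub_one_of_pos (div_pos hsp hsq)
      have e3 : q a * (√(p a) / √(q a)) = √(q a) * √(p a) := by
        nth_rewrite 1 [← Real.mul_self_sqrt h.le]
        field_simp
      rw [e1, ← e3]
      nlinarith
  have h2 : ∑ a, (√(q a) - √(p a)) ^ 2 ≤ ∑ a, q a * Real.log (q a / p a) := by
    have e : ∀ a, (√(q a) - √(p a)) ^ 2 = (2 * q a - 2 * (√(q a) * √(p a))) + (p a - q a) := by
      intro a
      have := Real.sq_sqrt (hq0 a)
      have := Real.sq_sqrt (hp0 a)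
      nlinarith
    simp only [e]
    rw [Finset.sum_add_distrib, Finset.sum_sub_distrib (f := p), hq1, hp1, sub_self, add_zero]
    exact Finset.sum_le_sum fun a _ => h1 a
  have h3 : ∑ a, (√(q a) + √(p a)) ^ 2 ≤ 4 := by
    have e : ∀ a, (√(q a) + √(p a)) ^ 2 ≤ 2 * q a + 2 * p a := by
      intro a
      have := Real.sq_sqrt (hq0 a)
      have := Real.sq_sqrt (hp0 a)
      nlinarith [sq_nonneg (√(q a) - √(p a))]
    calc _ ≤ ∑ a, (2 * q a + 2 * p a) := Finset.sum_le_sum fun a _ => e a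
      _ = 4 := by rw [Finset.sum_add_distrib, ← Finset.mul_sum, ← Finset.mul_sum, hq1, hp1]; norm_num
  have h4 : ∑ a, |q a - p a| = ∑ a, |√(q a) - √(p a)| * (√(q a) + √(p a)) := by
    refine Finset.sum_congr rfl fun a _ => ?_
    have e := Real.sq_sqrt (hq0 a)
    have e' := Real.sq_sqrt (hp0 a)
    rw [← abs_of_nonneg (add_nonneg (Real.sqrt_nonneg (q a)) (Real.sqrt_nonneg (p a))), ← abs_mul]
    congr 1
    nlinarith
  rw [h4]
  refine (Finset.sum_mul_sq_le_sq_mul_sq _ _ _).trans ?_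
  simp only [sq_abs]
  have h5 : 0 ≤ ∑ a, (√(q a) - √(p a)) ^ 2 := Finset.sum_nonneg fun a _ => sq_nonneg _
  nlinarith

lemma sum_fib {Ω β : Type} [Fintype β] [DecidableEq β] (W : Finset Ω) (φ : Ω → β) (F : β → ℝ) :
    ∑ ω ∈ W, F (φ ω) = ∑ b, (#{ω ∈ W | φ ω = b} : ℝ) * F b := by
  rw [← Finset.sum_fiberwise W φ]
  refine Finset.sum_congr rfl fun b _ => ?_
  rw [← nsmul_eq_mul, ← Finset.sum_const]
  refine Finset.sum_congr rfl fun ω hω => ?_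
  rw [(Finset.mem_filter.1 hω).2]

section info
variable {I E Θ K : Type} [Fintype I] [DecidableEq I] [Fintype E] [DecidableEq E]
  [Fintype Θ] [DecidableEq Θ] [Fintype K] [DecidableEq K]

/-- Coordinatewise partial information. -/
def TT (τ : I → E → Θ) (ω : I → E) : I → Θ := fun i => τ i (ω i)

/-- Number of points of `W` with the given partial information. -/
noncomputable def cN (τ : I → E → Θ) (W : Finset (I → E)) (g : (I → E) → K)
    (t : I → Θ) (k : K) : ℝ := #{ω ∈ W | TT τ ω = t ∧ g ω = k}

/-- As `cN`, with the value at `i` prescribed as well. -/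
noncomputable def cNi (τ : I → E → Θ) (W : Finset (I → E)) (g : (I → E) → K) (i : I)
    (t : I → Θ) (k : K) (e : E) : ℝ := #{ω ∈ W | (TT τ ω = t ∧ g ω = k) ∧ ω i = e}

/-- Size of a fibre of `τ i`. -/
noncomputable def cM (τ : I → E → Θ) (i : I) (θ : Θ) : ℝ := #{e | τ i e = θ}

/-- Conditional relative entropy at coordinate `i`. -/
noncomputable def KLi (τ : I → E → Θ) (W : Finset (I → E)) (g : (I → E) → K) (i : I) : ℝ :=
  (∑ ω ∈ W, Real.log (cNi τ W g i (TT τ ω) (g ω) (ω i) * cM τ i (τ i (ω i)) /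
    cN τ W g (TT τ ω) (g ω))) / #W

lemma cN_pos (τ : I → E → Θ) (W : Finset (I → E)) (g : (I → E) → K) {ω : I → E} (h : ω ∈ W) :
    0 < cN τ W g (TT τ ω) (g ω) := by
  unfold cN; exact_mod_cast Finset.card_pos.2 ⟨ω, by simp [h]⟩

lemma cNi_pos (τ : I → E → Θ) (W : Finset (I → E)) (g : (I → E) → K) (i : I) {ω : I → E}
    (h : ω ∈ W) : 0 < cNi τ W g i (TT τ ω) (g ω) (ω i) := by
  unfold cNi; exact_mod_cast Finset.card_pos.2 ⟨ω, by simp [h]⟩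

lemma cM_pos (τ : I → E → Θ) (i : I) (e : E) : 0 < cM τ i (τ i e) := by
  unfold cM; exact_mod_cast Finset.card_pos.2 ⟨e, by simp⟩

lemma sum_cNi (τ : I → E → Θ) (W : Finset (I → E)) (g : (I → E) → K) (i : I) (t : I → Θ) (k : K) :
    ∑ e, cNi τ W g i t k e = cN τ W g t k := by
  have := sum_fib {ω ∈ W | TT τ ω = t ∧ g ω = k} (fun ω => ω i) (fun _ => 1)
  simp only [Finset.sum_const, nsmul_eq_mul, mul_one] at this
  unfold cNi cN
  rw [this]
  simp only [Finset.filter_filter]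

lemma sum_prod_le (τ : I → E → Θ) (W : Finset (I → E)) (g : (I → E) → K) :
    ∑ ω ∈ W, ∏ i, (cNi τ W g i (TT τ ω) (g ω) (ω i) * cM τ i (τ i (ω i)) /
      cN τ W g (TT τ ω) (g ω)) ≤ Fintype.card K * (Fintype.card E : ℝ) ^ Fintype.card I := by
  have nn : ∀ (ω : I → E) (t : I → Θ) (k : K),
      0 ≤ ∏ i, (cNi τ W g i t k (ω i) * cM τ i (t i) / cN τ W g t k) := by
    intro ω t k
    refine Finset.prod_nonneg fun i _ => ?_
    unfold cNi cM cN; positivity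
  have hpi : ∀ t : I → Θ, univ.filter (fun ω : I → E => TT τ ω = t)
      = Fintype.piFinset (fun i => univ.filter (fun e => τ i e = t i)) := by
    intro t; ext ω; simp [TT, funext_iff]
  have h1 : ∀ k, ∑ ω : I → E, ∏ i, (cNi τ W g i (TT τ ω) k (ω i) * cM τ i (TT τ ω i) /
      cN τ W g (TT τ ω) k) ≤ (Fintype.card E : ℝ) ^ Fintype.card I := by
    intro k
    have hfw := Finset.sum_fiberwise (univ : Finset (I → E)) (TT τ)
      (fun ω => ∏ i, (cNi τ W g i (TT τ ω) k (ω i) * cM τ i (TT τ ω i) / cN τ W g (TT τ ω) k))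
    have hfw1 := Finset.sum_fiberwise (univ : Finset (I → E)) (TT τ) (fun _ => (1 : ℝ))
    rw [← hfw]
    have hone : (Fintype.card E : ℝ) ^ Fintype.card I = ∑ _ω : I → E, (1 : ℝ) := by simp
    rw [hone, ← hfw1]
    refine Finset.sum_le_sum fun t _ => ?_
    calc ∑ ω with TT τ ω = t, ∏ i, (cNi τ W g i (TT τ ω) k (ω i) * cM τ i (TT τ ω i) / cN τ W g (TT τ ω) k)
        = ∑ ω with TT τ ω = t, ∏ i, (cNi τ W g i t k (ω i) * cM τ i (t i) / cN τ W g t k) := by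
          refine Finset.sum_congr rfl fun ω hω => ?_
          rw [(Finset.mem_filter.1 hω).2]
      _ = ∏ i, ∑ e with τ i e = t i, (cNi τ W g i t k e * cM τ i (t i) / cN τ W g t k) := by
          rw [hpi, Finset.prod_univ_sum]
      _ ≤ ∏ i, cM τ i (t i) := by
          refine Finset.prod_le_prod (fun i _ => Finset.sum_nonneg fun e _ => ?_) (fun i _ => ?_)
          · unfold cNi cM cN; positivity
          · have hle : ∑ e with τ i e = t i, cNi τ W g i t k e ≤ cN τ W g t k := by
              rw [← sum_cNi τ W g i t k]
              exact Finset.sum_le_sum_of_subset_of_nonneg (Finset.filter_subset _ _)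
                (fun e _ _ => by unfold cNi; positivity)
            rw [← Finset.sum_div, ← Finset.sum_mul]
            have hM : 0 ≤ cM τ i (t i) := by unfold cM; positivity
            have hN : 0 ≤ cN τ W g t k := by unfold cN; positivity
            rw [mul_comm, mul_div_assoc]
            exact mul_le_of_le_one_right hM (div_le_one_of_le₀ hle hN)
      _ = ∑ ω with TT τ ω = t, (1 : ℝ) := by
          rw [hpi, Finset.sum_const, nsmul_eq_mul, mul_one, Fintype.card_piFinset]
          push_cast
          rfl
  calc _ = ∑ ω ∈ W, ∏ i, (cNi τ W g i (TT τ ω) (g ω) (ω i) * cM τ i (TT τ ω i) /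
      cN τ W g (TT τ ω) (g ω)) := rfl
    _ ≤ ∑ ω ∈ W, ∑ k, ∏ i, (cNi τ W g i (TT τ ω) k (ω i) * cM τ i (TT τ ω i) /
      cN τ W g (TT τ ω) k) := by
        refine Finset.sum_le_sum fun ω _ => ?_
        exact Finset.single_le_sum (f := fun k => ∏ i, (cNi τ W g i (TT τ ω) k (ω i) *
          cM τ i (TT τ ω i) / cN τ W g (TT τ ω) k)) (fun k _ => nn ω (TT τ ω) k) (mem_univ (g ω))
    _ ≤ ∑ ω, ∑ k, ∏ i, (cNi τ W g i (TT τ ω) k (ω i) * cM τ i (TT τ ω i) /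
      cN τ W g (TT τ ω) k) :=
        Finset.sum_le_sum_of_subset_of_nonneg (Finset.subset_univ _)
          (fun ω _ _ => Finset.sum_nonneg fun k _ => nn ω (TT τ ω) k)
    _ = ∑ k, ∑ ω, ∏ i, (cNi τ W g i (TT τ ω) k (ω i) * cM τ i (TT τ ω i) /
      cN τ W g (TT τ ω) k) := Finset.sum_comm
    _ ≤ ∑ _k : K, (Fintype.card E : ℝ) ^ Fintype.card I := Finset.sum_le_sum fun k _ => h1 k
    _ = _ := by simp

lemma sum_KLi_le (τ : I → E → Θ) (W : Finset (I → E)) (g : (I → E) → K) (hW : W.Nonempty) :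
    ∑ i, KLi τ W g i ≤
      Real.log (Fintype.card K * (Fintype.card E : ℝ) ^ Fintype.card I / #W) := by
  have hWp : (0 : ℝ) < #W := by exact_mod_cast hW.card_pos
  have hpos : ∀ ω ∈ W, ∀ i, 0 < cNi τ W g i (TT τ ω) (g ω) (ω i) * cM τ i (τ i (ω i)) /
      cN τ W g (TT τ ω) (g ω) := fun ω h i =>
    div_pos (mul_pos (cNi_pos τ W g i h) (cM_pos τ i _)) (cN_pos τ W g h)
  obtain ⟨ω₀, hω₀⟩ := hW
  have hle := sum_prod_le τ W g
  set Bd := (Fintype.card K * (Fintype.card E : ℝ) ^ Fintype.card I) with hBd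
  have hBp : 0 < Bd := by
    refine lt_of_lt_of_le ?_ hle
    exact Finset.sum_pos (fun ω h => Finset.prod_pos fun i _ => hpos ω h i) ⟨ω₀, hω₀⟩
  have hA : 0 < Bd / #W := div_pos hBp hWp
  unfold KLi
  rw [← Finset.sum_div, Finset.sum_comm, div_le_iff₀ hWp]
  calc _ = ∑ ω ∈ W, Real.log (∏ i, (cNi τ W g i (TT τ ω) (g ω) (ω i) * cM τ i (τ i (ω i)) /
      cN τ W g (TT τ ω) (g ω))) := by
        refine Finset.sum_congr rfl fun ω h => ?_
        rw [Real.log_prod (fun i _ => (hpos ω h i).ne')]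
    _ ≤ ∑ ω ∈ W, (Real.log (Bd / #W) + ((∏ i, (cNi τ W g i (TT τ ω) (g ω) (ω i) *
      cM τ i (τ i (ω i)) / cN τ W g (TT τ ω) (g ω))) / (Bd / #W) - 1)) := by
        refine Finset.sum_le_sum fun ω h => ?_
        have hx := Finset.prod_pos fun i (_ : i ∈ univ) => hpos ω h i
        have := Real.log_le_sub_one_of_pos (div_pos hx hA)
        rw [Real.log_div hx.ne' hA.ne'] at this
        linarith
    _ = #W * Real.log (Bd / #W) + ((∑ ω ∈ W, ∏ i, (cNi τ W g i (TT τ ω) (g ω) (ω i) *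
      cM τ i (τ i (ω i)) / cN τ W g (TT τ ω) (g ω))) / (Bd / #W) - #W) := by
        rw [Finset.sum_add_distrib, Finset.sum_sub_distrib, Finset.sum_const, Finset.sum_const,
          Finset.sum_div]
        simp
    _ ≤ #W * Real.log (Bd / #W) + (Bd / (Bd / #W) - #W) := by
        gcongr
    _ = _ := by
        have : Bd / (Bd / #W) = #W := by field_simp
        rw [this]; ring

lemma KLi_dual (τ : I → E → Θ) (W : Finset (I → E)) (g : (I → E) → K) (hW : W.Nonempty) (i : I)
    (σ : (I → Θ) → K → E → ℝ) (hσ : ∀ t k e, |σ t k e| ≤ 1) :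
    ((∑ ω ∈ W, (σ (TT τ ω) (g ω) (ω i) -
      (∑ e with τ i e = τ i (ω i), σ (TT τ ω) (g ω) e) / cM τ i (τ i (ω i)))) / #W) ^ 2
      ≤ 4 * KLi τ W g i := by
  have hWp : (0 : ℝ) < #W := by exact_mod_cast hW.card_pos
  let q : ((I → Θ) × K) × E → ℝ := fun a => cNi τ W g i a.1.1 a.1.2 a.2 / #W
  let p : ((I → Θ) × K) × E → ℝ := fun a => cN τ W g a.1.1 a.1.2 / #W *
    (if τ i a.2 = a.1.1 i then 1 / cM τ i (a.1.1 i) else 0)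
  have hqF : ∀ F : ((I → Θ) × K) × E → ℝ, ∑ a, q a * F a
      = (∑ ω ∈ W, F ((TT τ ω, g ω), ω i)) / #W := by
    intro F
    rw [sum_fib W (fun ω => ((TT τ ω, g ω), ω i)) F, Finset.sum_div]
    refine Finset.sum_congr rfl fun a _ => ?_
    simp only [q, cNi, Prod.ext_iff]
    ring
  have hpF : ∀ F : ((I → Θ) × K) × E → ℝ, ∑ a, p a * F a
      = (∑ ω ∈ W, (∑ e with τ i e = τ i (ω i), F ((TT τ ω, g ω), e)) /
        cM τ i (τ i (ω i))) / #W := by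
    intro F
    have : ∑ ω ∈ W, (∑ e with τ i e = τ i (ω i), F ((TT τ ω, g ω), e)) / cM τ i (τ i (ω i)) = _ :=
      sum_fib W (fun ω => (TT τ ω, g ω)) (fun b => (∑ e with τ i e = b.1 i, F (b, e)) / cM τ i (b.1 i))
    rw [this, Finset.sum_div, Fintype.sum_prod_type]
    refine Finset.sum_congr rfl fun b _ => ?_
    simp only [p, cN, Finset.sum_filter]
    rw [mul_div_assoc, Finset.sum_div, Finset.sum_div, Finset.mul_sum]
    refine Finset.sum_congr rfl fun e _ => ?_
    simp only [Prod.ext_iff]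
    split_ifs <;> ring
  have hq0 : ∀ a, 0 ≤ q a := fun a => by simp only [q, cNi]; positivity
  have hp0 : ∀ a, 0 ≤ p a := fun a => by
    simp only [p, cN, cM]; split_ifs <;> positivity
  have hq1 : ∑ a, q a = 1 := by
    have := hqF (fun _ => 1)
    simp only [mul_one, Finset.sum_const, nsmul_eq_mul] at this
    rw [this, div_self hWp.ne']
  have hp1 : ∑ a, p a = 1 := by
    have := hpF (fun _ => 1)
    simp only [mul_one, Finset.sum_const, nsmul_eq_mul] at this
    rw [this]
    have h : ∀ ω ∈ W, (#{e | τ i e = τ i (ω i)} : ℝ) / cM τ i (τ i (ω i)) = 1 := fun ω _ =>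
      div_self (cM_pos τ i (ω i)).ne'
    rw [Finset.sum_congr rfl h]
    simp only [mul_one, Finset.sum_const, nsmul_eq_mul]
    rw [div_self hWp.ne']
  have hqp : ∀ a, 0 < q a → 0 < p a := by
    rintro ⟨⟨t, k⟩, e⟩ h
    have h' : 0 < cNi τ W g i t k e := by
      by_contra hc
      have : cNi τ W g i t k e ≤ 0 := not_lt.1 hc
      exact absurd h (not_lt.2 (div_nonpos_of_nonpos_of_nonneg this hWp.le))
    unfold cNi at h'
    obtain ⟨ω, hω⟩ := Finset.card_pos.1 (by exact_mod_cast h' : 0 < #{ω ∈ W | (TT τ ω = t ∧ g ω = k) ∧ ω i = e})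
    obtain ⟨hωW, ⟨rfl, rfl⟩, rfl⟩ := Finset.mem_filter.1 hω
    simp only [p]
    rw [if_pos (show τ i (ω i) = TT τ ω i from rfl)]
    exact mul_pos (div_pos (cN_pos τ W g hωW) hWp) (one_div_pos.2 (cM_pos τ i (ω i)))
  have hpin := pinsker q p hq0 hp0 hq1 hp1 hqp
  have hKL : ∑ a, q a * Real.log (q a / p a) = KLi τ W g i := by
    rw [hqF (fun a => Real.log (q a / p a))]
    unfold KLi
    congr 1
    refine Finset.sum_congr rfl fun ω h => ?_
    congr 1
    simp only [q, p]
    rw [if_pos (show τ i (ω i) = TT τ ω i from rfl)]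
    have h1 := (cN_pos τ W g h).ne'
    have h2 := (cM_pos τ i (ω i)).ne'
    simp only [TT] at h1 h2 ⊢
    field_simp
  rw [hKL] at hpin
  refine le_trans ?_ hpin
  rw [sq_le_sq]
  have hd := hqF (fun a => σ a.1.1 a.1.2 a.2)
  have hd' := hpF (fun a => σ a.1.1 a.1.2 a.2)
  simp only at hd hd'
  rw [Finset.sum_sub_distrib, sub_div, ← hd, ← hd', ← Finset.sum_sub_distrib]
  rw [abs_of_nonneg (Finset.sum_nonneg fun a _ => abs_nonneg (q a - p a))]
  refine (Finset.abs_sum_le_sum_abs _ _).trans (Finset.sum_le_sum fun a _ => ?_)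
  rw [← sub_mul, abs_mul]
  exact mul_le_of_le_one_right (abs_nonneg _) (hσ _ _ _)

lemma KLi_nonneg (τ : I → E → Θ) (W : Finset (I → E)) (g : (I → E) → K) (hW : W.Nonempty) (i : I) :
    0 ≤ KLi τ W g i := by
  have := KLi_dual τ W g hW i (fun _ _ _ => 0) (by simp)
  simp at this
  exact this

end info
end PR

namespace PR
open Finset

lemma dual_to_l1 {Ω U R X : Type} [Fintype U] [DecidableEq U] [Fintype R] [DecidableEq R]
    [DecidableEq X] (W : Finset Ω) (υ : Ω → U) (e : Ω → R) (q : R → X) (δ : ℝ)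
    (H : ∀ σ : U → R → ℝ, (∀ u r, |σ u r| ≤ 1) →
      (∑ ω ∈ W, (σ (υ ω) (e ω) - (∑ r with q r = q (e ω), σ (υ ω) r) /
        #{r | q r = q (e ω)})) / #W ≤ δ)
    (B : U → R → ℝ) (hB : ∀ u r, B u r = (#{ω ∈ W | υ ω = u ∧ e ω = r} : ℝ) / #W) :
    ∑ r, ∑ u, |B u r - (∑ r' with q r' = q r, B u r') / #{r' | q r' = q r}| ≤ δ := by
  let σ : U → R → ℝ := fun u r =>
    (SignType.sign (B u r - (∑ r' with q r' = q r, B u r') / #{r' | q r' = q r}) : ℝ)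
  have hσ : ∀ u r, |σ u r| ≤ 1 := by
    intro u r
    simp only [σ]
    rcases SignType.sign (B u r - (∑ r' with q r' = q r, B u r') / #{r' | q r' = q r}) <;> simp
  have hBF : ∀ F : U → R → ℝ, ∑ r, ∑ u, B u r * F u r = (∑ ω ∈ W, F (υ ω) (e ω)) / #W := by
    intro F
    have := sum_fib W (fun ω => (υ ω, e ω)) (fun p => F p.1 p.2)
    simp only at this
    rw [this, Fintype.sum_prod_type, Finset.sum_comm, Finset.sum_div]
    refine Finset.sum_congr rfl fun u _ => ?_
    rw [Finset.sum_div]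
    refine Finset.sum_congr rfl fun r _ => ?_
    rw [hB]; simp only [Prod.ext_iff]; ring
  refine le_trans (le_of_eq ?_) (H σ hσ)
  rw [← hBF (fun u r => σ u r - (∑ r' with q r' = q r, σ u r') / #{r' | q r' = q r})]
  have e1 : ∀ u r, |B u r - (∑ r' with q r' = q r, B u r') / #{r' | q r' = q r}|
      = B u r * σ u r - (∑ r' with q r' = q r, B u r') / #{r' | q r' = q r} * σ u r := by
    intro u r
    rw [← sub_mul]
    exact (self_mul_sign _).symm
  simp only [e1, mul_sub, Finset.sum_sub_distrib]
  congr 1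
  rw [Finset.sum_comm, Finset.sum_comm (s := univ (α := R))]
  refine Finset.sum_congr rfl fun u _ => ?_
  simp only [Finset.sum_div, Finset.sum_mul, Finset.mul_sum, Finset.sum_filter]
  rw [Finset.sum_comm]
  refine Finset.sum_congr rfl fun r _ => Finset.sum_congr rfl fun r' _ => ?_
  by_cases h : q r = q r'
  · rw [if_pos h, if_pos h.symm, h]; ring
  · rw [if_neg h, if_neg (fun h' => h h'.symm)]; simp

lemma rectangle {I E : Type} [Fintype I] (F : Finset (I → E))
    (mix : (I → E) → (I → E) → (I → E)) (hmix : ∀ ω ω', mix (mix ω ω') (mix ω' ω) = ω)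
    (hF : ∀ ω ∈ F, ∀ ω' ∈ F, mix ω ω' ∈ F) (φ ψ : (I → E) → ℝ)
    (hφ : ∀ ω ∈ F, ∀ ω' ∈ F, φ (mix ω ω') = φ ω) (hψ : ∀ ω ∈ F, ∀ ω' ∈ F, ψ (mix ω ω') = ψ ω') :
    (#F : ℝ) * ∑ ω ∈ F, φ ω * ψ ω = (∑ ω ∈ F, φ ω) * ∑ ω ∈ F, ψ ω := by
  rw [Finset.sum_mul_sum, ← Finset.sum_product', ← nsmul_eq_mul, Finset.smul_sum]
  have : ∀ ω ∈ F, #F • (φ ω * ψ ω) = ∑ _ω' ∈ F, φ ω * ψ ω := fun ω _ => by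
    rw [Finset.sum_const]
  rw [Finset.sum_congr rfl this, ← Finset.sum_product']
  refine Finset.sum_nbij' (fun p => (mix p.1 p.2, mix p.2 p.1)) (fun p => (mix p.1 p.2, mix p.2 p.1))
    ?_ ?_ ?_ ?_ ?_
  · rintro ⟨a, b⟩ h
    rw [Finset.mem_product] at h ⊢
    exact ⟨hF _ h.1 _ h.2, hF _ h.2 _ h.1⟩
  · rintro ⟨a, b⟩ h
    rw [Finset.mem_product] at h ⊢
    exact ⟨hF _ h.1 _ h.2, hF _ h.2 _ h.1⟩
  · rintro ⟨a, b⟩ _; simp [hmix]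
  · rintro ⟨a, b⟩ _; simp [hmix]
  · rintro ⟨a, b⟩ h
    rw [Finset.mem_product] at h
    simp only at h ⊢
    rw [hφ _ h.1 _ h.2, hψ _ h.2 _ h.1]

lemma resample {I E : Type} [Fintype I] [DecidableEq I] [Fintype E] [DecidableEq E]
    (i : I) (r : E) (h : (I → E) → ℝ) :
    (Fintype.card E : ℝ) * ∑ ω with ω i = r, h ω = ∑ ω, h (Function.update ω i r) := by
  rw [← nsmul_eq_mul, Finset.smul_sum]
  have : ∀ ω ∈ univ.filter (fun ω : I → E => ω i = r),
      Fintype.card E • h ω = ∑ _r' : E, h ω := fun ω _ => by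
    rw [Finset.sum_const, Finset.card_univ]
  rw [Finset.sum_congr rfl this, ← Finset.sum_product']
  refine Finset.sum_nbij' (fun p => Function.update p.1 i p.2)
    (fun ω => (Function.update ω i r, ω i)) ?_ ?_ ?_ ?_ ?_
  · intro p _; simp
  · intro p _; simp
  · rintro ⟨ω, r'⟩ hp
    simp only [mem_product, mem_filter, mem_univ, true_and, and_true] at hp
    subst hp
    simp
  · intro ω _; simp
  · rintro ⟨ω, r'⟩ hp
    simp only [mem_product, mem_filter, mem_univ, true_and, and_true] at hp
    subst hp
    simp

lemma kernel_exists {A : Type} [Fintype A] [Nonempty A] (c : A → ℝ) (hc : ∀ a, 0 ≤ c a) :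
    ∃ α : A → ℝ, (∀ a, 0 ≤ α a) ∧ ∑ a, α a = 1 ∧ ∀ a, c a = (∑ b, c b) * α a := by
  classical
  by_cases h : ∑ b, c b = 0
  · obtain ⟨a₀⟩ := ‹Nonempty A›
    refine ⟨fun a => if a = a₀ then 1 else 0, fun a => by dsimp only; split_ifs <;> norm_num, by simp, ?_⟩
    intro a
    rw [h, zero_mul]
    exact (Finset.sum_eq_zero_iff_of_nonneg (fun u _ => hc u)).1 h a (mem_univ a)
  · refine ⟨fun a => c a / ∑ b, c b, fun a => div_nonneg (hc a) (Finset.sum_nonneg fun b _ => hc b),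
      ?_, fun a => by field_simp⟩
    rw [← Finset.sum_div, div_self h]

section game
variable {R Q₁ Q₂ A₁ A₂ Θ I : Type} [Fintype R] [Nonempty R]
    [Fintype Q₁] [DecidableEq Q₁] [Fintype Q₂] [DecidableEq Q₂]
    [Fintype A₁] [Nonempty A₁] [Fintype A₂] [Nonempty A₂]
    [Fintype I] [DecidableEq I] [DecidableEq R] [DecidableEq A₁] [DecidableEq A₂]
    [Fintype Θ] [DecidableEq Θ]

/-- Queries to the first prover. -/
def Xv (f : R → Q₁ × Q₂) (ω : I → R) : I → Q₁ := fun j => (f (ω j)).1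
/-- Queries to the second prover. -/
def Yv (f : R → Q₁ × Q₂) (ω : I → R) : I → Q₂ := fun j => (f (ω j)).2

/-- Seeds on which all coordinates in `S` are won. -/
def winSet (f : R → Q₁ × Q₂) (V : R → A₁ → A₂ → Bool) (P₁ : (I → Q₁) → I → A₁)
    (P₂ : (I → Q₂) → I → A₂) (S : Finset I) : Finset (I → R) :=
  univ.filter fun ω => ∀ j ∈ S, V (ω j) (P₁ (Xv f ω) j) (P₂ (Yv f ω) j) = true

/-- Answers on the coordinates in `S`. -/
def ans (f : R → Q₁ × Q₂) (P₁ : (I → Q₁) → I → A₁)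
    (P₂ : (I → Q₂) → I → A₂) (S : Finset I) (ω : I → R) : (S → A₁) × (S → A₂) :=
  (fun j => P₁ (Xv f ω) j, fun j => P₂ (Yv f ω) j)

lemma cond_indep (f : R → Q₁ × Q₂) (V : R → A₁ → A₂ → Bool) (P₁ : (I → Q₁) → I → A₁)
    (P₂ : (I → Q₂) → I → A₂) (S : Finset I) (i : I) (hi : i ∉ S)
    (τ : I → R → Θ) (hτi : ∀ r r', τ i r = τ i r') (hτS : ∀ j ∈ S, Function.Injective (τ j))
    (D : I → Bool)
    (hD1 : ∀ j, j ≠ i → D j = true → ∀ r r', τ j r = τ j r' → (f r).1 = (f r').1)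
    (hD2 : ∀ j, j ≠ i → D j = false → ∀ r r', τ j r = τ j r' → (f r).2 = (f r').2) :
    ∃ (α : (I → Θ) × ((S → A₁) × (S → A₂)) → Q₁ → A₁ → ℝ)
      (β : (I → Θ) × ((S → A₁) × (S → A₂)) → Q₂ → A₂ → ℝ),
      (∀ u x a, 0 ≤ α u x a) ∧ (∀ u x, ∑ a, α u x a = 1) ∧
      (∀ u x a, 0 ≤ β u x a) ∧ (∀ u x, ∑ a, β u x a = 1) ∧
      ∀ u r, ∑ ω ∈ winSet f V P₁ P₂ S with (TT τ ω, ans f P₁ P₂ S ω) = u ∧ ω i = r,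
          ind (V (ω i) (P₁ (Xv f ω) i) (P₂ (Yv f ω) i)) =
        (#{ω ∈ winSet f V P₁ P₂ S | (TT τ ω, ans f P₁ P₂ S ω) = u ∧ ω i = r} : ℝ) *
          win f V α β r u := by
  let F : (I → Θ) → Finset (I → R) := fun t => univ.filter fun ω => TT τ ω = t
  let φ₁ : (I → Θ) × ((S → A₁) × (S → A₂)) → Q₁ → A₁ → (I → R) → ℝ := fun u x a ω =>
    if (∀ j : S, P₁ (Function.update (Xv f ω) i x) j = u.2.1 j) ∧
      P₁ (Function.update (Xv f ω) i x) i = a then 1 else 0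
  let φ₂ : (I → Θ) × ((S → A₁) × (S → A₂)) → Q₂ → A₂ → (I → R) → ℝ := fun u y b ω =>
    if (∀ j : S, P₂ (Function.update (Yv f ω) i y) j = u.2.2 j) ∧
      P₂ (Function.update (Yv f ω) i y) i = b then 1 else 0
  have hφ₁0 : ∀ u x a ω, 0 ≤ φ₁ u x a ω := fun u x a ω => by
    simp only [φ₁]; split_ifs <;> norm_num
  have hφ₂0 : ∀ u x a ω, 0 ≤ φ₂ u x a ω := fun u x a ω => by
    simp only [φ₂]; split_ifs <;> norm_num
  choose α hα0 hα1 hα using fun u x => kernel_exists (fun a => ∑ ω ∈ F u.1, φ₁ u x a ω)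
    (fun a => Finset.sum_nonneg fun ω _ => hφ₁0 u x a ω)
  choose β hβ0 hβ1 hβ using fun u y => kernel_exists (fun b => ∑ ω ∈ F u.1, φ₂ u y b ω)
    (fun b => Finset.sum_nonneg fun ω _ => hφ₂0 u y b ω)
  refine ⟨α, β, hα0, hα1, hβ0, hβ1, ?_⟩
  intro u r
  set Fib := (winSet f V P₁ P₂ S).filter
    (fun ω => (TT τ ω, ans f P₁ P₂ S ω) = u ∧ ω i = r) with hFib
  rcases Fib.eq_empty_or_nonempty with hemp | ⟨ω₀, hω₀⟩
  · rw [hemp]; simp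
  rw [hFib, Finset.mem_filter] at hω₀
  obtain ⟨hω₀W, hω₀u, hω₀r⟩ := hω₀
  have hω₀W' := (Finset.mem_filter.1 hω₀W).2
  have hupdX : ∀ ω r', Function.update (Xv f (Function.update ω i r')) i = Function.update (Xv f ω) i := by
    intro ω r'; funext x j
    by_cases hj : j = i
    · subst hj; simp
    · simp [hj, Xv]
  have hupdY : ∀ ω r', Function.update (Yv f (Function.update ω i r')) i = Function.update (Yv f ω) i := by
    intro ω r'; funext x j
    by_cases hj : j = i
    · subst hj; simp
    · simp [hj, Yv]
  have hupdT : ∀ ω r', TT τ (Function.update ω i r') = TT τ ω := by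
    intro ω r'; funext j
    by_cases hj : j = i
    · subst hj; exact hτi _ _
    · simp [hj, TT]
  -- membership in Fib
  have hmem : ∀ ω, ω i = r → ∀ a b,
      (if ω ∈ Fib ∧ P₁ (Xv f ω) i = a ∧ P₂ (Yv f ω) i = b then (1 : ℝ) else 0) =
      if TT τ ω = u.1 then φ₁ u (f r).1 a ω * φ₂ u (f r).2 b ω else 0 := by
    intro ω hω a b
    have hX : Function.update (Xv f ω) i (f r).1 = Xv f ω := by
      rw [← hω]; exact Function.update_eq_self i (Xv f ω)
    have hY : Function.update (Yv f ω) i (f r).2 = Yv f ω := by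
      rw [← hω]; exact Function.update_eq_self i (Yv f ω)
    simp only [φ₁, φ₂, hX, hY]
    have hFibiff : ω ∈ Fib ↔ TT τ ω = u.1 ∧ (∀ j : S, P₁ (Xv f ω) j = u.2.1 j) ∧
        (∀ j : S, P₂ (Yv f ω) j = u.2.2 j) := by
      constructor
      · intro h
        rw [hFib, Finset.mem_filter] at h
        obtain ⟨_, h, _⟩ := h
        rw [← h]
        exact ⟨rfl, fun j => rfl, fun j => rfl⟩
      · rintro ⟨h1, h2, h3⟩
        have hu : (TT τ ω, ans f P₁ P₂ S ω) = u :=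
          Prod.ext h1 (Prod.ext (funext h2) (funext h3))
        rw [hFib, Finset.mem_filter]
        refine ⟨?_, hu, hω⟩
        refine Finset.mem_filter.2 ⟨mem_univ _, fun j hj => ?_⟩
        have e1 : ω j = ω₀ j := by
          refine hτS j hj ?_
          have : TT τ ω = TT τ ω₀ := by rw [h1, ← hω₀u]
          exact congrFun this j
        have e2 : P₁ (Xv f ω) j = P₁ (Xv f ω₀) j := by
          rw [h2 ⟨j, hj⟩, ← hω₀u]; rfl
        have e3 : P₂ (Yv f ω) j = P₂ (Yv f ω₀) j := by
          rw [h3 ⟨j, hj⟩, ← hω₀u]; rfl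
        rw [e1, e2, e3]
        exact hω₀W' j hj
    by_cases hp : TT τ ω = u.1 ∧ (∀ j : S, P₁ (Xv f ω) j = u.2.1 j) ∧
        (∀ j : S, P₂ (Yv f ω) j = u.2.2 j)
    · rw [if_pos hp.1, ite_zero_mul_ite_zero, mul_one]
      have hF := hFibiff.2 hp
      refine if_congr ?_ rfl rfl
      have h2 := hp.2.1
      have h3 := hp.2.2
      tauto
    · have hF : ω ∉ Fib := fun h => hp (hFibiff.1 h)
      rw [if_neg (fun h => hF h.1)]
      rw [ite_zero_mul_ite_zero, mul_one, ← ite_and]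
      rw [if_neg (fun h => hp ⟨h.1, h.2.1.1, h.2.2.1⟩)]
  have hFpos : (0 : ℝ) < #(F u.1) := by
    have : ω₀ ∈ F u.1 := Finset.mem_filter.2 ⟨mem_univ _, by rw [← hω₀u]⟩
    exact_mod_cast Finset.card_pos.2 ⟨ω₀, this⟩
  have hRpos : (0 : ℝ) < Fintype.card R := by exact_mod_cast Fintype.card_pos
  -- rectangle property
  have hrect : ∀ a b, (#(F u.1) : ℝ) * ∑ ω ∈ F u.1, φ₁ u (f r).1 a ω * φ₂ u (f r).2 b ω =
      (∑ ω ∈ F u.1, φ₁ u (f r).1 a ω) * ∑ ω ∈ F u.1, φ₂ u (f r).2 b ω := by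
    intro a b
    have hsame : ∀ ω ∈ F u.1, ∀ ω' ∈ F u.1, ∀ j, τ j (ω j) = τ j (ω' j) := by
      intro ω h ω' h' j
      have e := (Finset.mem_filter.1 h).2
      have e' := (Finset.mem_filter.1 h').2
      exact congrFun (e.trans e'.symm) j
    refine rectangle (F u.1) (fun ω ω' j => if D j = true then ω' j else ω j) ?_ ?_ _ _ ?_ ?_
    · intro ω ω'; funext j; by_cases h : D j = true <;> simp [h]
    · intro ω h ω' h'
      refine Finset.mem_filter.2 ⟨mem_univ _, ?_⟩
      funext j
      by_cases hd : D j = true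
      · simp only [TT, hd, if_true]
        exact congrFun (Finset.mem_filter.1 h').2 j
      · simp only [TT, hd]
        exact congrFun (Finset.mem_filter.1 h).2 j
    · intro ω h ω' h'
      have : Function.update (Xv f (fun j => if D j = true then ω' j else ω j)) i (f r).1
          = Function.update (Xv f ω) i (f r).1 := by
        funext j
        by_cases hj : j = i
        · subst hj; simp
        · simp only [Function.update_of_ne hj, Xv]
          by_cases hd : D j = true
          · rw [if_pos hd]; exact hD1 j hj hd _ _ (hsame _ h' _ h j)
          · rw [if_neg hd]
      simp only [φ₁, this]
    · intro ω h ω' h'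
      have : Function.update (Yv f (fun j => if D j = true then ω' j else ω j)) i (f r).2
          = Function.update (Yv f ω') i (f r).2 := by
        funext j
        by_cases hj : j = i
        · subst hj; simp
        · simp only [Function.update_of_ne hj, Yv]
          by_cases hd : D j = true
          · rw [if_pos hd]
          · rw [if_neg hd]; exact hD2 j hj (by simpa using hd) _ _ (hsame _ h _ h' j)
      simp only [φ₂, this]
  set N := (#(F u.1) : ℝ) * Fintype.card R with hN
  have hNpos : 0 < N := mul_pos hFpos hRpos
  have hcnt : ∀ a b, N * ∑ ω ∈ Fib, (if P₁ (Xv f ω) i = a ∧ P₂ (Yv f ω) i = b then (1 : ℝ) else 0)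
      = (∑ ω ∈ F u.1, φ₁ u (f r).1 a ω) * ∑ ω ∈ F u.1, φ₂ u (f r).2 b ω := by
    intro a b
    rw [← hrect, hN, mul_assoc]
    congr 1
    have e1 : ∑ ω ∈ Fib, (if P₁ (Xv f ω) i = a ∧ P₂ (Yv f ω) i = b then (1 : ℝ) else 0)
        = ∑ ω with ω i = r,
          (if TT τ ω = u.1 then φ₁ u (f r).1 a ω * φ₂ u (f r).2 b ω else 0) := by
      have : ∀ ω ∈ univ.filter (fun ω : I → R => ω i = r),
          (if TT τ ω = u.1 then φ₁ u (f r).1 a ω * φ₂ u (f r).2 b ω else 0) =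
          (if ω ∈ Fib then (if P₁ (Xv f ω) i = a ∧ P₂ (Yv f ω) i = b then (1 : ℝ) else 0) else 0) := by
        intro ω h
        rw [← hmem ω (Finset.mem_filter.1 h).2 a b, ite_and]
      rw [Finset.sum_congr rfl this, Finset.sum_ite_mem]
      refine Finset.sum_congr ?_ fun _ _ => rfl
      ext ω
      simp only [mem_inter, mem_filter, mem_univ, true_and]
      constructor
      · intro h; refine ⟨?_, h⟩
        rw [hFib, Finset.mem_filter] at h; exact h.2.2
      · exact fun h => h.2
    rw [e1, resample]
    simp only [φ₁, φ₂, hupdX, hupdY, hupdT, F, Finset.sum_filter]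
  refine mul_left_cancel₀ hNpos.ne' ?_
  have hL : ∑ ω ∈ Fib, ind (V (ω i) (P₁ (Xv f ω) i) (P₂ (Yv f ω) i)) =
      ∑ a, ∑ b, (∑ ω ∈ Fib, (if P₁ (Xv f ω) i = a ∧ P₂ (Yv f ω) i = b then (1 : ℝ) else 0)) *
        ind (V r a b) := by
    simp only [Finset.sum_mul]
    calc _ = ∑ ω ∈ Fib, ∑ a, ∑ b, (if P₁ (Xv f ω) i = a ∧ P₂ (Yv f ω) i = b then (1 : ℝ) else 0) *
        ind (V r a b) := by
          refine Finset.sum_congr rfl fun ω h => ?_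
          rw [hFib, Finset.mem_filter] at h
          rw [h.2.2]
          simp [ite_and]
      _ = _ := by
          rw [Finset.sum_comm]
          refine Finset.sum_congr rfl fun a _ => ?_
          rw [Finset.sum_comm]
  have hC : (#Fib : ℝ) =
      ∑ a, ∑ b, (∑ ω ∈ Fib, (if P₁ (Xv f ω) i = a ∧ P₂ (Yv f ω) i = b then (1 : ℝ) else 0)) := by
    calc _ = ∑ ω ∈ Fib, ∑ a, ∑ b, (if P₁ (Xv f ω) i = a ∧ P₂ (Yv f ω) i = b then (1 : ℝ) else 0) := by
          simp [ite_and]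
      _ = _ := by
          rw [Finset.sum_comm]
          refine Finset.sum_congr rfl fun a _ => ?_
          rw [Finset.sum_comm]
  have hNC : N * #Fib = (∑ a, ∑ ω ∈ F u.1, φ₁ u (f r).1 a ω) *
      ∑ b, ∑ ω ∈ F u.1, φ₂ u (f r).2 b ω := by
    rw [hC, Finset.mul_sum, Finset.sum_mul_sum]
    refine Finset.sum_congr rfl fun a _ => ?_
    rw [Finset.mul_sum]
    exact Finset.sum_congr rfl fun b _ => hcnt a b
  have hα' : ∀ a, ∑ ω ∈ F u.1, φ₁ u (f r).1 a ω = _ := fun a => hα u (f r).1 a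
  have hβ' : ∀ b, ∑ ω ∈ F u.1, φ₂ u (f r).2 b ω = _ := fun b => hβ u (f r).2 b
  rw [hL, ← mul_assoc, hNC]
  set s₁ := ∑ a, ∑ ω ∈ F u.1, φ₁ u (f r).1 a ω
  set s₂ := ∑ b, ∑ ω ∈ F u.1, φ₂ u (f r).2 b ω
  clear_value s₁ s₂
  unfold win
  rw [Finset.mul_sum, Finset.mul_sum]
  refine Finset.sum_congr rfl fun a _ => ?_
  rw [Finset.mul_sum, Finset.mul_sum]
  refine Finset.sum_congr rfl fun b _ => ?_
  rw [← mul_assoc, hcnt a b, hα' a, hβ' b]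
  ring

end game
end PR

namespace PR
open Finset

section game
variable {R Q₁ Q₂ A₁ A₂ Θ I : Type} [Fintype R] [Nonempty R]
    [Fintype Q₁] [DecidableEq Q₁] [Fintype Q₂] [DecidableEq Q₂]
    [Fintype A₁] [Nonempty A₁] [Fintype A₂] [Nonempty A₂]
    [Fintype I] [DecidableEq I] [DecidableEq R] [DecidableEq A₁] [DecidableEq A₂]
    [Fintype Θ] [DecidableEq Θ]

lemma step (f : R → Q₁ × Q₂) (V : R → A₁ → A₂ → Bool) (P₁ : (I → Q₁) → I → A₁)
    (P₂ : (I → Q₂) → I → A₂) (S : Finset I) (i : I) (hi : i ∉ S)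
    (hW : (winSet f V P₁ P₂ S).Nonempty)
    (τ : I → R → Θ) (hτi : ∀ r r', τ i r = τ i r') (hτS : ∀ j ∈ S, Function.Injective (τ j))
    (D : I → Bool)
    (hD1 : ∀ j, j ≠ i → D j = true → ∀ r r', τ j r = τ j r' → (f r).1 = (f r').1)
    (hD2 : ∀ j, j ≠ i → D j = false → ∀ r r', τ j r = τ j r' → (f r).2 = (f r').2) (δ : ℝ)
    (H1 : ∀ σ : (I → Θ) × ((S → A₁) × (S → A₂)) → R → ℝ, (∀ u r, |σ u r| ≤ 1) →
      (∑ ω ∈ winSet f V P₁ P₂ S, (σ (TT τ ω, ans f P₁ P₂ S ω) (ω i) -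
        (∑ r with (f r).1 = (f (ω i)).1, σ (TT τ ω, ans f P₁ P₂ S ω) r) /
        #{r | (f r).1 = (f (ω i)).1})) / #(winSet f V P₁ P₂ S) ≤ δ)
    (H2 : ∀ σ : (I → Θ) × ((S → A₁) × (S → A₂)) → R → ℝ, (∀ u r, |σ u r| ≤ 1) →
      (∑ ω ∈ winSet f V P₁ P₂ S, (σ (TT τ ω, ans f P₁ P₂ S ω) (ω i) -
        (∑ r with (f r).2 = (f (ω i)).2, σ (TT τ ω, ans f P₁ P₂ S ω) r) /
        #{r | (f r).2 = (f (ω i)).2})) / #(winSet f V P₁ P₂ S) ≤ δ)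
    (H3 : ∀ σ : Unit → R → ℝ, (∀ u r, |σ u r| ≤ 1) →
      (∑ ω ∈ winSet f V P₁ P₂ S, (σ () (ω i) - (∑ r with () = (), σ () r) /
        #{_r : R | () = ()})) / #(winSet f V P₁ P₂ S) ≤ δ) :
    (#(winSet f V P₁ P₂ (insert i S)) : ℝ) / #(winSet f V P₁ P₂ S) ≤ gameValue f V + 10 * δ := by
  obtain ⟨α, β, hα0, hα1, hβ0, hβ1, hk⟩ := cond_indep f V P₁ P₂ S i hi τ hτi hτS D hD1 hD2
  set W := winSet f V P₁ P₂ S with hWdef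
  have hWp : (0 : ℝ) < #W := by exact_mod_cast hW.card_pos
  let U := (I → Θ) × ((S → A₁) × (S → A₂))
  let υ : (I → R) → U := fun ω => (TT τ ω, ans f P₁ P₂ S ω)
  let B : U → R → ℝ := fun u r => (#{ω ∈ W | υ ω = u ∧ ω i = r} : ℝ) / #W
  have hne : Nonempty U := ⟨υ hW.choose⟩
  have h1 := dual_to_l1 W υ (fun ω => ω i) (fun r => (f r).1) δ H1 B (fun u r => rfl)
  have h2 := dual_to_l1 W υ (fun ω => ω i) (fun r => (f r).2) δ H2 B (fun u r => rfl)
  have h3 := dual_to_l1 W (fun _ => ()) (fun ω => ω i) (fun _ => ()) δ H3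
    (fun _ r => (#{ω ∈ W | () = () ∧ ω i = r} : ℝ) / #W) (fun u r => rfl)
  have hBs : ∀ r, ∑ u, B u r = (#{ω ∈ W | ω i = r} : ℝ) / #W := by
    intro r
    simp only [B]
    rw [← Finset.sum_div]
    congr 1
    have := Finset.card_eq_sum_card_fiberwise (s := W.filter fun ω => ω i = r) (t := univ)
      (f := υ) (fun _ _ => by simp)
    rw [this]
    push_cast
    refine Finset.sum_congr rfl fun u _ => ?_
    rw [Finset.filter_filter]
    congr 2
    ext ω; simp only [mem_filter]; tauto
  have hB1 : ∑ r, (#{ω ∈ W | ω i = r} : ℝ) / #W = 1 := by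
    rw [← Finset.sum_div, div_eq_one_iff_eq hWp.ne']
    have := Finset.card_eq_sum_card_fiberwise (s := W) (t := univ)
      (f := fun ω : I → R => ω i) (fun _ _ => by simp)
    rw [this]; push_cast; rfl
  have h3' : ∑ r, |∑ u, B u r - 1 / Fintype.card R| ≤ δ := by
    refine le_trans (le_of_eq ?_) h3
    refine Finset.sum_congr rfl fun r _ => ?_
    simp only [hBs, true_and, Finset.filter_true, Finset.univ_unique, Finset.sum_const,
      Finset.card_singleton, one_smul, hB1, Finset.card_univ]
  have hq : ∀ u r, B u r ∈ (Rat.castHom ℝ).fieldRange := by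
    intro u r
    exact ⟨(#{ω ∈ W | υ ω = u ∧ ω i = r} : ℚ) / #W, by simp [B]⟩
  have hfin := embed f V α β hα0 hα1 hβ0 hβ1 B (fun u r => by positivity) hq δ h1 h2 h3'
  refine le_trans (le_of_eq ?_) hfin
  have e1 : (#(winSet f V P₁ P₂ (insert i S)) : ℝ) =
      ∑ ω ∈ W, ind (V (ω i) (P₁ (Xv f ω) i) (P₂ (Yv f ω) i)) := by
    have : winSet f V P₁ P₂ (insert i S) =
        W.filter (fun ω => V (ω i) (P₁ (Xv f ω) i) (P₂ (Yv f ω) i) = true) := by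
      rw [hWdef]
      ext ω
      simp only [winSet, mem_filter, mem_univ, true_and, Finset.forall_mem_insert]
      tauto
    rw [this, Finset.card_filter]
    push_cast
    refine Finset.sum_congr rfl fun ω _ => ?_
    cases V (ω i) (P₁ (Xv f ω) i) (P₂ (Yv f ω) i) <;> simp [ind]
  rw [e1, ← Finset.sum_fiberwise W (fun ω => ω i), Finset.sum_div]
  refine Finset.sum_congr rfl fun r _ => ?_
  rw [← Finset.sum_fiberwise _ υ, Finset.sum_div]
  refine Finset.sum_congr rfl fun u _ => ?_
  rw [Finset.filter_filter]
  have e2 : (W.filter fun ω => ω i = r ∧ υ ω = u) = W.filter fun ω => υ ω = u ∧ ω i = r := by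
    ext ω; simp only [mem_filter]; tauto
  rw [e2, hk u r]
  simp only [B, υ]
  ring

/-- The partial information revealed. -/
def tauD (f : R → Q₁ × Q₂) (S : Finset I) (D : I → Bool) (j : I) (r : R) : R ⊕ (Q₁ ⊕ Q₂) :=
  if j ∈ S then Sum.inl r else if D j = true then Sum.inr (Sum.inl (f r).1)
    else Sum.inr (Sum.inr (f r).2)

lemma round (f : R → Q₁ × Q₂) (V : R → A₁ → A₂ → Bool) (P₁ : (I → Q₁) → I → A₁)
    (P₂ : (I → Q₂) → I → A₂) (S : Finset I) (i : I) (hi : i ∉ S)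
    (hW : (winSet f V P₁ P₂ S).Nonempty) (D : I → Bool) (κ : ℝ)
    (K1 : KLi (tauD f S (Function.update D i true)) (winSet f V P₁ P₂ S) (ans f P₁ P₂ S) i ≤ κ)
    (K2 : KLi (tauD f S (Function.update D i false)) (winSet f V P₁ P₂ S) (ans f P₁ P₂ S) i ≤ κ)
    (K3 : KLi (fun (_ : I) (_ : R) => ()) (winSet f V P₁ P₂ S) (fun _ => ()) i ≤ κ) :
    (#(winSet f V P₁ P₂ (insert i S)) : ℝ) / #(winSet f V P₁ P₂ S) ≤
      gameValue f V + 10 * √(4 * κ) := by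
  obtain ⟨r₀⟩ := ‹Nonempty R›
  let θ₀ : R ⊕ (Q₁ ⊕ Q₂) := Sum.inl r₀
  let τ : I → R → R ⊕ (Q₁ ⊕ Q₂) := fun j r => if j = i then θ₀ else tauD f S D j r
  have hup : ∀ b ω, Function.update (TT (tauD f S (Function.update D i b)) ω) i θ₀ = TT τ ω := by
    intro b ω
    funext j
    by_cases hj : j = i
    · subst hj; simp [TT, τ]
    · simp [TT, τ, hj, tauD]
  have : Nonempty R := ⟨r₀⟩
  refine step f V P₁ P₂ S i hi hW τ (fun r r' => by simp [τ]) ?_ D ?_ ?_ _ ?_ ?_ ?_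
  · intro j hj r r' h
    have hji : j ≠ i := fun h => hi (h ▸ hj)
    simpa [τ, hji, tauD, hj] using h
  · intro j hji hd r r' h
    by_cases hj : j ∈ S
    · have : r = r' := by simpa [τ, hji, tauD, hj] using h
      rw [this]
    · simpa [τ, hji, tauD, hj, hd] using h
  · intro j hji hd r r' h
    by_cases hj : j ∈ S
    · have : r = r' := by simpa [τ, hji, tauD, hj] using h
      rw [this]
    · simpa [τ, hji, tauD, hj, hd] using h
  · intro σ hσ
    have := KLi_dual (tauD f S (Function.update D i true)) (winSet f V P₁ P₂ S) (ans f P₁ P₂ S) hW i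
      (fun t k r => σ (Function.update t i θ₀, k) r) (fun t k r => hσ _ _)
    simp only [hup] at this
    have ht : ∀ r r', tauD f S (Function.update D i true) i r =
        tauD f S (Function.update D i true) i r' ↔ (f r).1 = (f r').1 := by
      intro r r'; simp [tauD, hi]
    simp only [ht, cM] at this
    exact Real.le_sqrt_of_sq_le (this.trans (by linarith))
  · intro σ hσ
    have := KLi_dual (tauD f S (Function.update D i false)) (winSet f V P₁ P₂ S) (ans f P₁ P₂ S) hW i
      (fun t k r => σ (Function.update t i θ₀, k) r) (fun t k r => hσ _ _)
    simp only [hup] at this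
    have ht : ∀ r r', tauD f S (Function.update D i false) i r =
        tauD f S (Function.update D i false) i r' ↔ (f r).2 = (f r').2 := by
      intro r r'; simp [tauD, hi]
    simp only [ht, cM] at this
    exact Real.le_sqrt_of_sq_le (this.trans (by linarith))
  · intro σ hσ
    have := KLi_dual (fun (_ : I) (_ : R) => ()) (winSet f V P₁ P₂ S) (fun _ => ()) hW i
      (fun _ _ r => σ () r) (fun t k r => hσ _ _)
    simp only [cM] at this
    exact Real.le_sqrt_of_sq_le (this.trans (by linarith))

lemma exists_round (f : R → Q₁ × Q₂) (V : R → A₁ → A₂ → Bool) (P₁ : (I → Q₁) → I → A₁)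
    (P₂ : (I → Q₂) → I → A₂) (S : Finset I) (hS : #S < Fintype.card I)
    (hW : (winSet f V P₁ P₂ S).Nonempty) (L : ℝ)
    (hL : Real.log ((Fintype.card ((S → A₁) × (S → A₂)) : ℝ) *
      (Fintype.card R : ℝ) ^ Fintype.card I / #(winSet f V P₁ P₂ S)) +
      Real.log (Fintype.card Unit * (Fintype.card R : ℝ) ^ Fintype.card I /
        #(winSet f V P₁ P₂ S)) ≤ L) :
    ∃ i ∉ S, (#(winSet f V P₁ P₂ (insert i S)) : ℝ) / #(winSet f V P₁ P₂ S) ≤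
      gameValue f V + 10 * √(8 * L / (Fintype.card I - #S)) := by
  set W := winSet f V P₁ P₂ S
  let a : (I → Bool) → I → ℝ := fun D i => KLi (tauD f S D) W (ans f P₁ P₂ S) i
  let b : I → ℝ := fun i => KLi (fun (_ : I) (_ : R) => ()) W (fun _ => ()) i
  have ha0 : ∀ D i, 0 ≤ a D i := fun D i => KLi_nonneg _ _ _ hW i
  have hb0 : ∀ i, 0 ≤ b i := fun i => KLi_nonneg _ _ _ hW i
  have hm : (0 : ℝ) < Fintype.card I - #S := by
    have : (#S : ℝ) < Fintype.card I := by exact_mod_cast hS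
    linarith
  set m : ℝ := Fintype.card I - #S with hmdef
  have hcm : (#Sᶜ : ℝ) = m := by
    rw [Finset.card_compl, Nat.cast_sub hS.le]
  have hne : (Sᶜ).Nonempty := by
    rw [← Finset.card_pos, Finset.card_compl]; omega
  have hD : ∀ D, ∑ i ∈ Sᶜ, (a D i + b i) ≤ L := by
    intro D
    refine le_trans ?_ hL
    rw [Finset.sum_add_distrib]
    refine add_le_add (le_trans ?_ (sum_KLi_le (tauD f S D) W (ans f P₁ P₂ S) hW))
      (le_trans ?_ (sum_KLi_le (fun (_ : I) (_ : R) => ()) W (fun _ => ()) hW))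
    · exact Finset.sum_le_sum_of_subset_of_nonneg (subset_univ _) fun i _ _ => ha0 D i
    · exact Finset.sum_le_sum_of_subset_of_nonneg (subset_univ _) fun i _ _ => hb0 i
  let N : ℝ := Fintype.card (I → Bool)
  have hN : 0 < N := by simp only [N]; exact_mod_cast Fintype.card_pos
  have hsum : ∑ i ∈ Sᶜ, ∑ D, (a D i + b i) ≤ ∑ i ∈ Sᶜ, N * (L / m) := by
    rw [Finset.sum_comm, Finset.sum_const, nsmul_eq_mul, hcm]
    calc _ ≤ ∑ _D : I → Bool, L := Finset.sum_le_sum fun D _ => hD D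
      _ = N * L := by rw [Finset.sum_const, nsmul_eq_mul, Finset.card_univ]
      _ = _ := by field_simp
  obtain ⟨i, hi, hiL⟩ := Finset.exists_le_of_sum_le hne hsum
  rw [Finset.mem_compl] at hi
  refine ⟨i, hi, ?_⟩
  -- pairing
  have hflip : ∑ D, (a D i + b i) = ∑ D, (a (Function.update D i (!D i)) i + b i) := by
    let fl : (I → Bool) → (I → Bool) := fun D => Function.update D i (!D i)
    have hinv : Function.Involutive fl := by
      intro D; funext j
      by_cases hj : j = i
      · subst hj; simp [fl]
      · simp [fl, hj]
    exact (Equiv.sum_comp hinv.toPerm (fun D => a D i + b i)).symm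
  have hpair : ∑ D, ((a D i + b i) + (a (Function.update D i (!D i)) i + b i)) ≤
      ∑ _D : I → Bool, 2 * (L / m) := by
    rw [Finset.sum_add_distrib, ← hflip, Finset.sum_const, nsmul_eq_mul, Finset.card_univ]
    simp only [N] at hiL
    linarith
  obtain ⟨D, -, hDD⟩ := Finset.exists_le_of_sum_le univ_nonempty hpair
  have key : a (Function.update D i true) i + a (Function.update D i false) i + 2 * b i
      ≤ 2 * (L / m) := by
    have hself : Function.update D i (D i) = D := Function.update_eq_self i D
    cases h : D i
    · rw [h] at hDD hself
      rw [hself]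
      simp only [Bool.not_false] at hDD
      linarith
    · rw [h] at hDD hself
      rw [hself]
      simp only [Bool.not_true] at hDD
      linarith
  have := round f V P₁ P₂ S i hi hW D (2 * (L / m))
    (by have := ha0 (Function.update D i false) i; have := hb0 i; simp only [a, b] at *; linarith)
    (by have := ha0 (Function.update D i true) i; have := hb0 i; simp only [a, b] at *; linarith)
    (by have := ha0 (Function.update D i true) i; have := ha0 (Function.update D i false) i
        have := hb0 i; simp only [a, b] at *; linarith)
  have e : 8 * L / m = 4 * (2 * (L / m)) := by ring
  rw [e]
  exact this

end game
end PR

namespace PR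
open Finset

/-- Auxiliary rate. -/
noncomputable def gam (v : ℝ) (s : ℕ) : ℝ := ((1 - v) / 80) ^ 2 / (Real.log s + 2)

/-- The exponent in the theorem. -/
noncomputable def cst (v : ℝ) (s : ℕ) : ℝ :=
  gam v s * min (-Real.log ((1 + v) / 2)) 1 / Real.log 2

lemma gam_pos (v : ℝ) (h1 : v < 1) (s : ℕ) : 0 < gam v s := by
  have := Real.log_natCast_nonneg s
  unfold gam
  have : 0 < (1 - v) / 80 := by linarith
  positivity

lemma gam_le (v : ℝ) (h0 : 0 ≤ v) (h1 : v < 1) (s : ℕ) : gam v s ≤ 1 / 2 := by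
  have := Real.log_natCast_nonneg s
  unfold gam
  rw [div_le_iff₀ (by linarith)]
  nlinarith

lemma cst_pos (v : ℝ) (h0 : 0 ≤ v) (h1 : v < 1) (s : ℕ) : 0 < cst v s := by
  unfold cst
  have h := gam_pos v h1 s
  have h2 : 0 < -Real.log ((1 + v) / 2) := by
    have := Real.log_neg (x := (1 + v) / 2) (by linarith) (by linarith)
    linarith
  have h3 := Real.log_pos (x := 2) (by norm_num)
  have h4 : 0 < min (-Real.log ((1 + v) / 2)) 1 := lt_min h2 one_pos
  positivity

section game
variable {R Q₁ Q₂ A₁ A₂ I : Type} [Fintype R] [Nonempty R]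
    [Fintype Q₁] [DecidableEq Q₁] [Fintype Q₂] [DecidableEq Q₂]
    [Fintype A₁] [Nonempty A₁] [Fintype A₂] [Nonempty A₂]

lemma gameValue_nonneg (f : R → Q₁ × Q₂) (V : R → A₁ → A₂ → Bool) : 0 ≤ gameValue f V := by
  unfold gameValue
  obtain ⟨P⟩ : Nonempty ((Q₁ → A₁) × (Q₂ → A₂)) := inferInstance
  refine le_trans ?_ (Finset.le_sup' _ (mem_univ P))
  positivity

variable [Fintype I] [DecidableEq I] [DecidableEq R] [DecidableEq A₁] [DecidableEq A₂]

lemma win_mono (f : R → Q₁ × Q₂) (V : R → A₁ → A₂ → Bool) (P₁ : (I → Q₁) → I → A₁)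
    (P₂ : (I → Q₂) → I → A₂) {S T : Finset I} (h : S ⊆ T) :
    (#(winSet f V P₁ P₂ T) : ℝ) ≤ #(winSet f V P₁ P₂ S) := by
  have : winSet f V P₁ P₂ T ⊆ winSet f V P₁ P₂ S := by
    intro ω hω
    simp only [winSet, mem_filter, mem_univ, true_and] at hω ⊢
    exact fun j hj => hω j (h hj)
  exact_mod_cast Finset.card_le_card this

lemma one_step (f : R → Q₁ × Q₂) (V : R → A₁ → A₂ → Bool) (P₁ : (I → Q₁) → I → A₁)
    (P₂ : (I → Q₂) → I → A₂) (hv : gameValue f V < 1) (S : Finset I)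
    (g : ℝ) (hg : g = gam (gameValue f V) (Fintype.card A₁ * Fintype.card A₂))
    (hS : (#S : ℝ) < g * Fintype.card I)
    (hw : Real.exp (-(g * Fintype.card I)) <
      #(winSet f V P₁ P₂ S) / (Fintype.card R : ℝ) ^ Fintype.card I) :
    ∃ i ∉ S, (#(winSet f V P₁ P₂ (insert i S)) : ℝ) ≤
      (1 + gameValue f V) / 2 * #(winSet f V P₁ P₂ S) := by
  have hv0 := gameValue_nonneg f V
  set v := gameValue f V with hvdef
  set s := Fintype.card A₁ * Fintype.card A₂ with hs
  set n := Fintype.card I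
  have hg0 : 0 < g := hg ▸ gam_pos v hv s
  have hg1 : g ≤ 1 / 2 := hg ▸ gam_le v hv0 hv s
  have hls := Real.log_natCast_nonneg s
  have hn : (0 : ℝ) < n := by
    by_contra h
    have : (n : ℝ) = 0 := le_antisymm (not_lt.1 h) (by positivity)
    rw [this, mul_zero] at hS
    exact absurd hS (not_lt.2 (by positivity))
  have hRp : (0 : ℝ) < (Fintype.card R : ℝ) ^ n := by
    have : (0 : ℝ) < Fintype.card R := by exact_mod_cast Fintype.card_pos
    positivity
  have hwp : (0 : ℝ) < #(winSet f V P₁ P₂ S) := by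
    by_contra h
    have h' : (#(winSet f V P₁ P₂ S) : ℝ) = 0 := le_antisymm (not_lt.1 h) (by positivity)
    rw [h', zero_div] at hw
    exact absurd hw (not_lt.2 (Real.exp_pos _).le)
  have hW : (winSet f V P₁ P₂ S).Nonempty := Finset.card_pos.1 (by exact_mod_cast hwp)
  have hsp : (0 : ℝ) < s := by
    have : 0 < s := Nat.mul_pos Fintype.card_pos Fintype.card_pos
    exact_mod_cast this
  have hlw : Real.log ((Fintype.card R : ℝ) ^ n / #(winSet f V P₁ P₂ S)) ≤ g * n := by
    have := (Real.lt_log_iff_exp_lt (by positivity)).2 hw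
    rw [← inv_div, Real.log_inv]
    linarith
  have hcK : (Fintype.card ((S → A₁) × (S → A₂)) : ℝ) = (s : ℝ) ^ #S := by
    rw [hs]; simp [mul_pow]
  have hSn : (#S : ℝ) < n := by nlinarith
  obtain ⟨i, hi, h⟩ := exists_round f V P₁ P₂ S (by exact_mod_cast hSn) hW
    (g * n * (Real.log s + 2)) (by
      rw [hcK, mul_div_assoc, Real.log_mul (by positivity) (by positivity), Real.log_pow]
      simp only [Fintype.card_unit, Nat.cast_one, one_mul]
      have : (#S : ℝ) * Real.log s ≤ g * n * Real.log s := by gcongr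
      have hlw' := hlw
      nlinarith)
  refine ⟨i, hi, ?_⟩
  rw [div_le_iff₀ hwp] at h
  refine h.trans ?_
  refine mul_le_mul_of_nonneg_right ?_ hwp.le
  have hgl : g * (Real.log s + 2) = ((1 - v) / 80) ^ 2 := by
    rw [hg]; unfold gam
    field_simp
  have hden : (n : ℝ) / 2 ≤ n - #S := by nlinarith
  have hfrac : 8 * (g * n * (Real.log s + 2)) / (n - #S) ≤ ((1 - v) / 20) ^ 2 := by
    rw [div_le_iff₀ (by linarith)]
    have : 8 * (g * n * (Real.log s + 2)) = ((1 - v) / 20) ^ 2 * (n / 2) := by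
      calc _ = 8 * n * (g * (Real.log s + 2)) := by ring
        _ = _ := by rw [hgl]; ring
    rw [this]
    exact mul_le_mul_of_nonneg_left hden (sq_nonneg _)
  have hsq : √(8 * (g * n * (Real.log s + 2)) / (n - #S)) ≤ (1 - v) / 20 := by
    rw [← Real.sqrt_sq (show 0 ≤ (1 - v) / 20 by linarith)]
    exact Real.sqrt_le_sqrt hfrac
  linarith

lemma recursion (f : R → Q₁ × Q₂) (V : R → A₁ → A₂ → Bool) (P₁ : (I → Q₁) → I → A₁)
    (P₂ : (I → Q₂) → I → A₂) (hv : gameValue f V < 1)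
    (g : ℝ) (hg : g = gam (gameValue f V) (Fintype.card A₁ * Fintype.card A₂)) (k : ℕ) :
    k ≤ ⌈g * Fintype.card I⌉₊ → ∃ S : Finset I, #S = k ∧
      (#(winSet f V P₁ P₂ S) : ℝ) / (Fintype.card R : ℝ) ^ Fintype.card I ≤
        max (((1 + gameValue f V) / 2) ^ k) (Real.exp (-(g * Fintype.card I))) := by
  have hv0 := gameValue_nonneg f V
  have hg0 : 0 < g := hg ▸ gam_pos _ hv _
  have hg1 : g ≤ 1 / 2 := hg ▸ gam_le _ hv0 hv _
  have hRp : (0 : ℝ) < (Fintype.card R : ℝ) ^ Fintype.card I := by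
    have : (0 : ℝ) < Fintype.card R := by exact_mod_cast Fintype.card_pos
    positivity
  induction k with
  | zero =>
    intro _
    refine ⟨∅, rfl, le_max_of_le_left ?_⟩
    rw [pow_zero, div_le_one hRp]
    have : #(winSet f V P₁ P₂ ∅) ≤ Fintype.card R ^ Fintype.card I := by
      refine (Finset.card_le_univ _).trans (le_of_eq ?_)
      simp
    exact_mod_cast this
  | succ k ih =>
    intro hk
    obtain ⟨S, hSk, hS⟩ := ih (by omega)
    have hkn : (k : ℝ) < g * Fintype.card I := Nat.lt_ceil.1 (by omega)
    rw [← hSk] at hkn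
    rcases le_or_gt ((#(winSet f V P₁ P₂ S) : ℝ) / (Fintype.card R : ℝ) ^ Fintype.card I)
      (Real.exp (-(g * Fintype.card I))) with h | h
    · have hlt : #S < Fintype.card I := by
        have : (#S : ℝ) < Fintype.card I := by
          have : (0 : ℝ) ≤ Fintype.card I := by positivity
          nlinarith
        exact_mod_cast this
      have hne : (Sᶜ).Nonempty := by
        rw [← Finset.card_pos, Finset.card_compl]; omega
      obtain ⟨i, hi⟩ := hne
      rw [Finset.mem_compl] at hi
      refine ⟨insert i S, by rw [Finset.card_insert_of_notMem hi, hSk], le_max_of_le_right ?_⟩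
      refine le_trans ?_ h
      exact div_le_div_of_nonneg_right (win_mono f V P₁ P₂ (subset_insert i S)) hRp.le
    · obtain ⟨i, hi, hle⟩ := one_step f V P₁ P₂ hv S g hg hkn h
      refine ⟨insert i S, by rw [Finset.card_insert_of_notMem hi, hSk], le_max_of_le_left ?_⟩
      have hS' := (le_max_iff.1 hS).resolve_right (not_le.2 h)
      calc _ ≤ ((1 + gameValue f V) / 2 * #(winSet f V P₁ P₂ S)) /
            (Fintype.card R : ℝ) ^ Fintype.card I := div_le_div_of_nonneg_right hle hRp.le
        _ = (1 + gameValue f V) / 2 * (#(winSet f V P₁ P₂ S) /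
            (Fintype.card R : ℝ) ^ Fintype.card I) := by ring
        _ ≤ (1 + gameValue f V) / 2 * ((1 + gameValue f V) / 2) ^ k :=
            mul_le_mul_of_nonneg_left hS' (by linarith)
        _ = _ := by ring

lemma final_bound (f : R → Q₁ × Q₂) (V : R → A₁ → A₂ → Bool) (P₁ : (I → Q₁) → I → A₁)
    (P₂ : (I → Q₂) → I → A₂) (hv : gameValue f V < 1) :
    (#(winSet f V P₁ P₂ univ) : ℝ) / (Fintype.card R : ℝ) ^ Fintype.card I ≤
      (2 : ℝ) ^ (-(cst (gameValue f V) (Fintype.card A₁ * Fintype.card A₂) *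
        (Fintype.card I : ℝ))) := by
  have hv0 := gameValue_nonneg f V
  obtain ⟨S, -, hS⟩ := recursion f V P₁ P₂ hv _ rfl _ le_rfl
  have hRp : (0 : ℝ) < (Fintype.card R : ℝ) ^ Fintype.card I := by
    have : (0 : ℝ) < Fintype.card R := by exact_mod_cast Fintype.card_pos
    positivity
  refine (div_le_div_of_nonneg_right (win_mono f V P₁ P₂ (subset_univ S)) hRp.le).trans
    (hS.trans ?_)
  set v := gameValue f V
  set s := Fintype.card A₁ * Fintype.card A₂
  set n : ℝ := (Fintype.card I : ℝ)
  have hg0 : 0 < gam v s := gam_pos v hv s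
  have hn0 : 0 ≤ n := by simp only [n]; positivity
  have hl2 := Real.log_pos (x := 2) (by norm_num)
  have e : (2 : ℝ) ^ (-(cst v s * n)) =
      Real.exp (-(gam v s * n * min (-Real.log ((1 + v) / 2)) 1)) := by
    rw [Real.rpow_def_of_pos (by norm_num)]
    congr 1
    unfold cst
    field_simp
  rw [e]
  have hgn : 0 ≤ gam v s * n := by positivity
  refine max_le ?_ ?_
  · have hvp : 0 < (1 + v) / 2 := by linarith
    rw [← Real.exp_log (pow_pos hvp _), Real.log_pow, Real.exp_le_exp]
    have h1 := Nat.le_ceil (gam v s * n)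
    have h2 := min_le_left (-Real.log ((1 + v) / 2)) 1
    have h3 : Real.log ((1 + v) / 2) ≤ 0 := Real.log_nonpos hvp.le (by linarith)
    nlinarith [mul_le_mul_of_nonneg_left h2 hgn]
  · rw [Real.exp_le_exp]
    have h2 := min_le_right (-Real.log ((1 + v) / 2)) 1
    nlinarith [mul_le_mul_of_nonneg_left h2 hgn]

end game
end PR

/-- Raz's parallel repetition theorem: there is a function `c` assigning
to every `v ∈ [0,1)` and positive integer `s` a positive real `c v s`, such that for
every two-prover one-round game with value `< 1` and answer sets of total size
`|A₁|·|A₂| = s`, and every positive integer `ℓ`, the value of the `ℓ`-fold parallel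
repetition is at most `2^(−c(val, s)·ℓ)`. -/
theorem parallel_repetition :
    ∃ c : ℝ → ℕ → ℝ,
      (∀ v : ℝ, 0 ≤ v → v < 1 → ∀ s : ℕ, 0 < s → 0 < c v s) ∧
      ∀ (R Q₁ Q₂ A₁ A₂ : Type) [Fintype R] [Nonempty R]
        [Fintype Q₁] [DecidableEq Q₁] [Fintype Q₂] [DecidableEq Q₂]
        [Fintype A₁] [Nonempty A₁] [Fintype A₂] [Nonempty A₂]
        (f : R → Q₁ × Q₂) (V : R → A₁ → A₂ → Bool),
        gameValue f V < 1 →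
        ∀ ℓ : ℕ, 0 < ℓ →
          gameValue
            (fun r : Fin ℓ → R =>
              ((fun i => (f (r i)).1 : Fin ℓ → Q₁), (fun i => (f (r i)).2 : Fin ℓ → Q₂)))
            (fun (r : Fin ℓ → R) (a₁ : Fin ℓ → A₁) (a₂ : Fin ℓ → A₂) =>
              decide (∀ i : Fin ℓ, V (r i) (a₁ i) (a₂ i) = true)) ≤
          (2 : ℝ) ^ (-(c (gameValue f V) (Fintype.card A₁ * Fintype.card A₂) * (ℓ : ℝ))) := by
  refine ⟨PR.cst, fun v h0 h1 s _ => PR.cst_pos v h0 h1 s, ?_⟩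
  intro R Q₁ Q₂ A₁ A₂ _ _ _ _ _ _ _ _ _ _ f V hv ℓ _
  classical
  conv_lhs => unfold gameValue
  refine Finset.sup'_le _ _ fun P _ => ?_
  have h := PR.final_bound (I := Fin ℓ) f V P.1 P.2 hv
  rw [Fintype.card_fin] at h
  refine le_trans (le_of_eq ?_) h
  congr 1
  · congr 2
    ext ω
    simp [PR.winSet, PR.Xv, PR.Yv]
    rfl
  · simp
end

section
/- Let G, the partition data, and the Set Cover instance S be as in the construction. If there exist labelings φ_A : A → Σ_A and φ_B : B → Σ_B satisfying every edge of G (i.e., π_e(φ_A(a)) = φ_B(b) for every e = (a,b) ∈ E), then the |A| sets {S_{a, φ_A(a)} : a ∈ A} cover the entire universe β × B; in particular S has a set cover of size |A|. -/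
/-- The sets of Moshkovitz's Set Cover instance: for a vertex `a ∈ A` and a symbol
`σ ∈ Σ_A`, the set `S_{a,σ} ⊆ β × B` is the union, over the edges `e = (a, b)`
incident to `a`, of `P_{π_e(σ)}[j_b(e)] × {b}`. -/
def coverSet {A B SA SB β : Type} [DecidableEq A] [DecidableEq B] [DecidableEq β]
    (E : Finset (A × B)) (π : A × B → SA → SB) {k : ℕ}
    (P : SB → Fin k → Finset β) (j : A × B → Fin k) (a : A) (σ : SA) :
    Finset (β × B) :=
  (E.filter (fun e => e.1 = a)).biUnion
    (fun e => (P (π e σ) (j e)).image (fun x => (x, e.2)))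

/-- completeness of Moshkovitz's reduction: if the bi-regular
projection game `G` has labelings `φA, φB` satisfying every edge, then the `|A|` sets
`S_{a, φA(a)}` cover the whole universe `β × B`; in particular the Set Cover instance
has a cover of size `|A|`. -/
theorem moshkovitz_completeness
    {A B SA SB β : Type} [Fintype A] [DecidableEq A] [Fintype B] [DecidableEq B]
    [Fintype β] [DecidableEq β] [DecidableEq SA]
    (E : Finset (A × B)) (π : A × B → SA → SB)
    (DA k : ℕ)
    (hA : ∀ a : A, (E.filter (fun e => e.1 = a)).card = DA)
    (hB : ∀ b : B, (E.filter (fun e => e.2 = b)).card = k)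
    (P : SB → Fin k → Finset β)
    (hPdisj : ∀ σ, ∀ i i' : Fin k, i ≠ i' → Disjoint (P σ i) (P σ i'))
    (hPcover : ∀ σ, Finset.univ.biUnion (P σ) = (Finset.univ : Finset β))
    (j : A × B → Fin k)
    (hjsurj : ∀ b : B, ∀ i : Fin k, ∃ e ∈ E, e.2 = b ∧ j e = i)
    (hjinj : ∀ e₁ ∈ E, ∀ e₂ ∈ E, e₁.2 = e₂.2 → j e₁ = j e₂ → e₁ = e₂)
    (φA : A → SA) (φB : B → SB)
    (hsat : ∀ e ∈ E, π e (φA e.1) = φB e.2) :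
    Finset.univ.biUnion (fun a : A => coverSet E π P j a (φA a)) =
      (Finset.univ : Finset (β × B)) ∧
    ∃ 𝒞 : Finset (A × SA), 𝒞.card = Fintype.card A ∧
      𝒞.biUnion (fun p => coverSet E π P j p.1 p.2) =
        (Finset.univ : Finset (β × B)) := by
  have key : Finset.univ.biUnion (fun a : A => coverSet E π P j a (φA a)) =
      (Finset.univ : Finset (β × B)) := by
    refine Finset.eq_univ_of_forall ?_
    rintro ⟨x, b⟩
    have hx : x ∈ Finset.univ.biUnion (P (φB b)) := by
      rw [hPcover]; exact Finset.mem_univ x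
    obtain ⟨i, -, hi⟩ := Finset.mem_biUnion.mp hx
    obtain ⟨e, he, hb, hj⟩ := hjsurj b i
    refine Finset.mem_biUnion.mpr ⟨e.1, Finset.mem_univ _, ?_⟩
    refine Finset.mem_biUnion.mpr ⟨e, Finset.mem_filter.mpr ⟨he, rfl⟩, ?_⟩
    refine Finset.mem_image.mpr ⟨x, ?_, by rw [hb]⟩
    rw [hsat e he, hb, hj]
    exact hi
  refine ⟨key, Finset.univ.image (fun a => (a, φA a)), ?_, ?_⟩
  · rw [Finset.card_image_of_injective _ (fun a a' h => congrArg Prod.fst h),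
      Finset.card_univ]
  · rw [Finset.image_biUnion]
    exact key
end
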